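/- arXiv:2011.01199 — 5 statements merged into one kernel-verified Lean document; each statement's English description precedes it below -/
import Mathlib

section
/- Suppose α = 3/2 (so that β ∈ [3/4,1)). Then lim_{d→∞} (1/(d ln d)) Σ_{k,l=1}^{⌊dx⌋} δ_{kl}² = 9x/32. -/
open MeasureTheory ProbabilityTheory Filter

noncomputable section

/-- Hypotheses (H.1) and (H.2) on the pair `(φ, ψ)`, together with the
parameter constraints `β ∈ (0,1)`, `λ > 0`, `α ∈ (0, 2β]`, `ν ∈ (1,2]`. -/
def SelfSimilarHyp (β lam α ν : ℝ) (φ ψ : ℝ → ℝ) : Prop :=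
  β ∈ Set.Ioo (0 : ℝ) 1 ∧ 0 < lam ∧ α ∈ Set.Ioc (0 : ℝ) (2 * β) ∧
  ν ∈ Set.Ioc (1 : ℝ) 2 ∧
  -- (H.1): φ(y) = −λ(y−1)^α + ψ(y) on [1,∞)
  (∀ y : ℝ, 1 ≤ y → φ y = -lam * (y - 1) ^ α + ψ y) ∧
  -- ψ is twice differentiable on an open set containing [1,∞)
  (∃ S : Set ℝ, IsOpen S ∧ Set.Ici (1 : ℝ) ⊆ S ∧
    ∀ y ∈ S, DifferentiableAt ℝ ψ y ∧ DifferentiableAt ℝ (deriv ψ) y) ∧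
  -- bounds (a), (b) on ψ', ψ''
  (∃ C₀ : ℝ, 0 ≤ C₀ ∧
    (∀ y : ℝ, 1 < y → |deriv ψ y| ≤ C₀ * y ^ (α - 1)) ∧
    (∀ y : ℝ, 1 < y → |deriv (deriv ψ) y| ≤ C₀ * y⁻¹ * (y - 1) ^ (α - 1))) ∧
  -- (c): ψ'(1) = βψ(1) when α ≥ 1
  (1 ≤ α → deriv ψ 1 = β * ψ 1) ∧
  -- (H.2): bounds (d), (e) on φ', φ'' for y ≥ 2
  (∃ C₁ : ℝ, 0 < C₁ ∧ ∀ y : ℝ, 2 ≤ y →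
    ((α < 1 → |deriv φ y| ≤ C₁ * (y - 1) ^ (-ν) ∧
        |deriv (deriv φ) y| ≤ C₁ * (y - 1) ^ (-ν - 1)) ∧
     (1 ≤ α → |deriv φ y| ≤ C₁ * (y - 1) ^ (α - 2) ∧
        |deriv (deriv φ) y| ≤ C₁ * (y - 1) ^ (α - 3))))

/-- The covariance function `R(s,t) = (s∧t)^{2β} φ((s∨t)/(s∧t))` for `s,t > 0`,
and `R(s,t) = 0` if `s = 0` or `t = 0`. -/
def covR (β : ℝ) (φ : ℝ → ℝ) (s t : ℝ) : ℝ :=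
  if s = 0 ∨ t = 0 then 0 else (min s t) ^ (2 * β) * φ (max s t / min s t)

/-- `Δ(k,l) = R(k+1,l+1) − R(k,l+1) − R(k+1,l) + R(k,l)`. -/
def covΔ (β : ℝ) (φ : ℝ → ℝ) (k l : ℕ) : ℝ :=
  covR β φ (k + 1) (l + 1) - covR β φ k (l + 1) - covR β φ (k + 1) l + covR β φ k l

/-- `δ_{kl} = Δ(k,l)/√(Δ(k,k)Δ(l,l))`. -/
def covδ (β : ℝ) (φ : ℝ → ℝ) (k l : ℕ) : ℝ :=
  covΔ β φ k l / Real.sqrt (covΔ β φ k k * covΔ β φ l l)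

/-- For `m ∈ ℤ`, `a_α(m) = (1/2)(|m+1|^α + |m−1|^α − 2|m|^α)`. -/
def aFun (α : ℝ) (m : ℤ) : ℝ :=
  (|(m : ℝ) + 1| ^ α + |(m : ℝ) - 1| ^ α - 2 * |(m : ℝ)| ^ α) / 2

/-!
Near the diagonal the process looks like a fractional Brownian motion with time-dependent
amplitude. Taylor expansion of `φ` at `1`, together with `ψ'(1) = βψ(1)`, gives
`R(s,t) ≈ φ(1) (s^{2β} + t^{2β}) / 2 - λ s^{2β-α} |t - s|^α`, hence `Δ(k,k) ≈ 2λ k^{2β-α}`. Off the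
diagonal, `Δ(k,l)` is the mixed derivative `∂²R/∂s∂t` at an intermediate point, hence
`Δ(k,k+m) ≈ λα(α-1) k^{2β-α} m^{α-2}`. The amplitudes cancel in `δ`, which leaves
`m^{2-α} δ_{k,k+m} ≈ α(α-1)/2` with a relative error `O(1/m + (m/(k+m))^{2-α})`. For `α = 3/2` the
square of the main term is `9/(64 m)`; its double sum over `k, l ≤ N` is `2 · (9/64) · N log N` up
to `O(N)`, to which the diagonal and both error terms contribute `O(N)`.
-/

section RelativeError

open Asymptotics

variable {ι 𝕜 : Type*} [NormedField 𝕜] {l : Filter ι} {f g : ι → 𝕜} {e : ι → ℝ} {a b : 𝕜}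

lemma isBigO_one_of_isBigO_sub_const (hf : (fun i ↦ f i - a) =O[l] e)
    (he : e =O[l] fun _ ↦ (1 : ℝ)) : f =O[l] fun _ ↦ (1 : ℝ) := by
  simpa using (hf.trans he).add (isBigO_const_const a one_ne_zero l)

lemma isBigO_mul_sub_mul (he : e =O[l] fun _ ↦ (1 : ℝ)) (hf : (fun i ↦ f i - a) =O[l] e)
    (hg : (fun i ↦ g i - b) =O[l] e) : (fun i ↦ f i * g i - a * b) =O[l] e := by
  have hfg : (fun i ↦ (f i - a) * g i) =O[l] e := by
    simpa using hf.mul (isBigO_one_of_isBigO_sub_const hg he)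
  exact (hfg.add (hg.const_mul_left a)).congr_left fun i ↦ by ring

lemma isBigO_inv_sub_inv (hf : (fun i ↦ f i - a) =O[l] e)
    (hinv : (fun i ↦ (f i)⁻¹) =O[l] fun _ ↦ (1 : ℝ)) (hf₀ : ∀ᶠ i in l, f i ≠ 0) (ha : a ≠ 0) :
    (fun i ↦ (f i)⁻¹ - a⁻¹) =O[l] e := by
  have hprod : (fun i ↦ (f i - a) * (f i)⁻¹) =O[l] e := by simpa using hf.mul hinv
  refine (hprod.const_mul_left (-a⁻¹)).congr' (hf₀.mono fun i hi ↦ ?_) .rfl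
  field_simp
  ring

end RelativeError

section RealAnalysis

lemma abs_rpow_sub_one_le {x p : ℝ} (hx : 0 ≤ x) (hp₀ : 0 ≤ p) (hp₁ : p ≤ 1) :
    |x ^ p - 1| ≤ |x - 1| := by
  rcases le_total x 1 with hx₁ | hx₁
  · have lower : x ≤ x ^ p := by
      simpa using Real.rpow_le_rpow_of_exponent_ge' hx hx₁ hp₀ hp₁
    have upper : x ^ p ≤ 1 := Real.rpow_le_one hx hx₁ hp₀
    rw [abs_of_nonpos (by linarith), abs_of_nonpos (by linarith)]
    linarith
  · have lower : 1 ≤ x ^ p := Real.one_le_rpow hx₁ hp₀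
    have upper : x ^ p ≤ x := by simpa using Real.rpow_le_rpow_of_exponent_le hx₁ hp₁
    rw [abs_of_nonneg (by linarith), abs_of_nonneg (by linarith)]
    linarith

lemma add_one_rpow_le {x p : ℝ} (hx : 1 ≤ x) (hp₀ : 0 ≤ p) (hp₁ : p ≤ 1) :
    (x + 1) ^ p ≤ 2 * x ^ p := calc
  (x + 1) ^ p ≤ (2 * x) ^ p := Real.rpow_le_rpow (by linarith) (by linarith) hp₀
  _ = 2 ^ p * x ^ p := Real.mul_rpow two_pos.le (by linarith)
  _ ≤ 2 * x ^ p := by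
    gcongr
    exact Real.rpow_le_self_of_one_le one_le_two hp₁

lemma abs_sub_sub_deriv_mul_le {f f' f'' : ℝ → ℝ} {a x C : ℝ} (hax : a ≤ x)
    (hf : ∀ y ∈ Set.Icc a x, HasDerivAt f (f' y) y)
    (hf' : ∀ y ∈ Set.Icc a x, HasDerivAt f' (f'' y) y)
    (hC : ∀ y ∈ Set.Ioo a x, |f'' y| ≤ C) :
    |f x - f a - f' a * (x - a)| ≤ C * (x - a) ^ 2 := by
  rcases hax.eq_or_lt with rfl | hax
  · simp
  obtain ⟨ξ, hξ, slope_f⟩ := exists_hasDerivAt_eq_slope f f' hax (HasDerivAt.continuousOn hf)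
    fun y hy ↦ hf y (Set.Ioo_subset_Icc_self hy)
  have hξx : Set.Icc a ξ ⊆ Set.Icc a x := Set.Icc_subset_Icc_right hξ.2.le
  obtain ⟨ζ, hζ, slope_f'⟩ := exists_hasDerivAt_eq_slope f' f'' hξ.1
    (HasDerivAt.continuousOn fun y hy ↦ hf' y (hξx hy))
    fun y hy ↦ hf' y (hξx (Set.Ioo_subset_Icc_self hy))
  rw [eq_div_iff (sub_pos.2 hax).ne'] at slope_f
  rw [eq_div_iff (sub_pos.2 hξ.1).ne'] at slope_f'
  have hζC := hC ζ ⟨hζ.1, hζ.2.trans hξ.2⟩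
  calc |f x - f a - f' a * (x - a)| = |f'' ζ| * (ξ - a) * (x - a) := by
        rw [← slope_f, ← sub_mul, ← slope_f', abs_mul, abs_mul, abs_of_pos (sub_pos.2 hax),
          abs_of_pos (sub_pos.2 hξ.1)]
    _ ≤ C * (x - a) * (x - a) := by
        have : 0 ≤ C := (abs_nonneg _).trans hζC
        have : 0 ≤ ξ - a := sub_nonneg.2 hξ.1.le
        have : 0 ≤ x - a := sub_nonneg.2 hax.le
        gcongr
        exact hξ.2.le
    _ = C * (x - a) ^ 2 := by ring

lemma abs_one_add_rpow_sub_le {h p : ℝ} (hh : 0 ≤ h) (hp₁ : 1 ≤ p) (hp₂ : p ≤ 2) :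
    |(1 + h) ^ p - 1 - p * h| ≤ 2 * h ^ 2 := by
  have taylor := abs_sub_sub_deriv_mul_le (f := fun y ↦ y ^ p) (f' := fun y ↦ p * y ^ (p - 1))
    (f'' := fun y ↦ p * ((p - 1) * y ^ (p - 1 - 1))) (a := 1) (x := 1 + h) (C := 2) (by linarith)
    (fun _ _ ↦ Real.hasDerivAt_rpow_const (.inr hp₁))
    (fun y hy ↦ (Real.hasDerivAt_rpow_const (.inl (by linarith [hy.1]))).const_mul _)
    (fun y hy ↦ by
      have hy₀ : 0 < y ^ (p - 1 - 1) := Real.rpow_pos_of_pos (by linarith [hy.1]) _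
      have hy₁ : y ^ (p - 1 - 1) ≤ 1 :=
        Real.rpow_le_one_of_one_le_of_nonpos hy.1.le (by linarith)
      rw [abs_of_nonneg (mul_nonneg (by linarith) (mul_nonneg (by linarith) hy₀.le))]
      calc p * ((p - 1) * y ^ (p - 1 - 1)) ≤ 2 * (1 * 1) := by gcongr; linarith
        _ = 2 := by norm_num)
  simpa using taylor

lemma exists_mixed_difference_eq {F F₂ F₁₂ : ℝ → ℝ → ℝ} {a b c d : ℝ} (hab : a < b) (hcd : c < d)
    (hF : ∀ s ∈ Set.Icc a b, ∀ t ∈ Set.Icc c d, HasDerivAt (F s) (F₂ s t) t)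
    (hF₂ : ∀ s ∈ Set.Icc a b, ∀ t ∈ Set.Icc c d, HasDerivAt (F₂ · t) (F₁₂ s t) s) :
    ∃ s ∈ Set.Ioo a b, ∃ t ∈ Set.Ioo c d,
      F b d - F a d - F b c + F a c = F₁₂ s t * ((b - a) * (d - c)) := by
  have hincr : ∀ t ∈ Set.Icc c d, HasDerivAt (F b - F a) (F₂ b t - F₂ a t) t := fun t ht ↦
    (hF b (Set.right_mem_Icc.2 hab.le) t ht).sub (hF a (Set.left_mem_Icc.2 hab.le) t ht)
  obtain ⟨t, ht, slope_t⟩ := exists_hasDerivAt_eq_slope _ _ hcd (HasDerivAt.continuousOn hincr)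
    fun t ht ↦ hincr t (Set.Ioo_subset_Icc_self ht)
  have hF₂t := fun s hs ↦ hF₂ s hs t (Set.Ioo_subset_Icc_self ht)
  obtain ⟨s, hs, slope_s⟩ := exists_hasDerivAt_eq_slope (F₂ · t) (F₁₂ · t) hab
    (HasDerivAt.continuousOn hF₂t) fun s hs ↦ hF₂t s (Set.Ioo_subset_Icc_self hs)
  refine ⟨s, hs, t, ht, ?_⟩
  rw [slope_s, slope_t]
  have hba : b - a ≠ 0 := (sub_pos.2 hab).ne'
  have hdc : d - c ≠ 0 := (sub_pos.2 hcd).ne'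
  simp only [Pi.sub_apply]
  field_simp
  ring

end RealAnalysis

section OffDiagonal

open Asymptotics

/-- Relative error, at the pair `q = (k, m)`, made when the increment covariance at the indices
`k` and `l = k + m` is replaced by its power law in `m`: the first term is the discretisation
error, the second one comes from `(k, l)` not being close to the diagonal on the scale of `l`. -/
def offDiagError (p : ℝ) (q : ℕ × ℕ) : ℝ :=
  (q.2 : ℝ)⁻¹ + (q.2 / (q.1 + q.2 : ℝ)) ^ p

variable {η ξ : ℕ × ℕ → ℝ} {p γ : ℝ}

lemma offDiagError_nonneg (p : ℝ) (q : ℕ × ℕ) : 0 ≤ offDiagError p q := by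
  unfold offDiagError
  positivity

lemma isBigO_inv_offDiagError (p : ℝ) (l : Filter (ℕ × ℕ)) :
    (fun q : ℕ × ℕ ↦ (q.2 : ℝ)⁻¹) =O[l] offDiagError p := by
  refine .of_bound' (.of_forall fun q ↦ ?_)
  rw [Real.norm_of_nonneg (by positivity), Real.norm_of_nonneg (offDiagError_nonneg p q)]
  exact le_add_of_nonneg_right (by positivity)

lemma isBigO_rpow_offDiagError (p : ℝ) (l : Filter (ℕ × ℕ)) :
    (fun q : ℕ × ℕ ↦ (q.2 / (q.1 + q.2 : ℝ)) ^ p) =O[l] offDiagError p := by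
  refine .of_bound' (.of_forall fun q ↦ ?_)
  rw [Real.norm_of_nonneg (by positivity), Real.norm_of_nonneg (offDiagError_nonneg p q)]
  exact le_add_of_nonneg_left (by positivity)

lemma isBigO_div_offDiagError (hp : p ≤ 1) :
    (fun q : ℕ × ℕ ↦ (q.2 / (q.1 + q.2) : ℝ)) =O[𝓟 (Set.Ici (1, 1))] offDiagError p := by
  refine .trans (.of_bound' (eventually_principal.2 fun q hq ↦ ?_)) (isBigO_rpow_offDiagError p _)
  have hm : (1 : ℝ) ≤ q.2 := by exact_mod_cast hq.2
  rw [Real.norm_of_nonneg (by positivity), Real.norm_of_nonneg (by positivity)]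
  exact Real.self_le_rpow_of_le_one (by positivity) ((div_le_one (by positivity)).2 (by simp)) hp

lemma isBigO_offDiagError_one (hp : 0 ≤ p) :
    offDiagError p =O[𝓟 (Set.Ici (1, 1))] fun _ ↦ (1 : ℝ) := by
  refine .of_bound 2 (eventually_principal.2 fun q hq ↦ ?_)
  have hm : (1 : ℝ) ≤ q.2 := by exact_mod_cast hq.2
  rw [Real.norm_of_nonneg (offDiagError_nonneg p q), norm_one, mul_one, offDiagError]
  have hpow : (q.2 / (q.1 + q.2 : ℝ)) ^ p ≤ 1 :=
    Real.rpow_le_one (by positivity) ((div_le_one (by positivity)).2 (by simp)) hp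
  linarith [inv_le_one_of_one_le₀ hm]

lemma inv_le_two_mul_div {k m : ℝ} (hk : 1 ≤ k) (hm : 1 ≤ m) : k⁻¹ ≤ 2 * (m / (k + m)) := by
  rw [inv_eq_one_div, mul_div, div_le_div_iff₀ (by linarith) (by linarith)]
  nlinarith

lemma isBigO_inv_fst_offDiagError (hp : p ≤ 1) :
    (fun q : ℕ × ℕ ↦ (q.1 : ℝ)⁻¹) =O[𝓟 (Set.Ici (1, 1))] offDiagError p := by
  refine .trans (.of_bound 2 (eventually_principal.2 fun q hq ↦ ?_)) (isBigO_div_offDiagError hp)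
  rw [Real.norm_of_nonneg (by positivity), Real.norm_of_nonneg (by positivity)]
  exact inv_le_two_mul_div (by exact_mod_cast hq.1) (by exact_mod_cast hq.2)

lemma isBigO_rpow_neg_fst_offDiagError (hp : 0 ≤ p) :
    (fun q : ℕ × ℕ ↦ (q.1 : ℝ) ^ (-p)) =O[𝓟 (Set.Ici (1, 1))] offDiagError p := by
  refine .trans (.of_bound (2 ^ p) (eventually_principal.2 fun q hq ↦ ?_))
    (isBigO_rpow_offDiagError p _)
  rw [Real.norm_of_nonneg (by positivity), Real.norm_of_nonneg (by positivity),
    Real.rpow_neg_eq_inv_rpow, ← Real.mul_rpow two_pos.le (by positivity)]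
  exact Real.rpow_le_rpow (by positivity)
    (inv_le_two_mul_div (by exact_mod_cast hq.1) (by exact_mod_cast hq.2)) hp

lemma isBigO_rpow_neg_add_offDiagError (hp : 0 ≤ p) :
    (fun q : ℕ × ℕ ↦ ((q.1 + q.2 : ℕ) : ℝ) ^ (-p)) =O[𝓟 (Set.Ici (1, 1))] offDiagError p := by
  refine .trans (.of_bound' (eventually_principal.2 fun q hq ↦ ?_))
    (isBigO_rpow_neg_fst_offDiagError hp)
  have hk : (0 : ℝ) < q.1 := by exact_mod_cast hq.1
  rw [Real.norm_of_nonneg (by positivity), Real.norm_of_nonneg (by positivity)]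
  exact Real.rpow_le_rpow_of_nonpos hk (by simp) (neg_nonpos.2 hp)

lemma isBigO_rpow_div_fst_sub_one (hp : p ≤ 1) (hγ₀ : 0 ≤ γ) (hγ₁ : γ ≤ 1)
    (hη : ∀ q ∈ Set.Ici ((1, 2) : ℕ × ℕ), η q ∈ Set.Ioo (q.1 : ℝ) (q.1 + 1)) :
    (fun q ↦ (η q / q.1) ^ γ - 1) =O[𝓟 (Set.Ici (1, 2))] offDiagError p := by
  refine .trans (.of_bound' (eventually_principal.2 fun q hq ↦ ?_))
    ((isBigO_inv_fst_offDiagError hp).mono (principal_mono.2 (Set.Ici_subset_Ici.2 (by decide))))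
  obtain ⟨hkη, hηk⟩ := hη q hq
  have hk : (0 : ℝ) < q.1 := by exact_mod_cast hq.1
  have hη₀ : 0 < η q := hk.trans hkη
  rw [Real.norm_eq_abs, Real.norm_of_nonneg (by positivity)]
  calc |(η q / q.1) ^ γ - 1| ≤ |η q / q.1 - 1| :=
        abs_rpow_sub_one_le (by positivity) hγ₀ hγ₁
    _ = (η q - q.1) / q.1 := by
        rw [div_sub_one hk.ne', abs_of_nonneg (div_nonneg (by linarith) hk.le)]
    _ ≤ (q.1 : ℝ)⁻¹ := by
        rw [inv_eq_one_div]
        gcongr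
        linarith

lemma isBigO_rpow_snd_div_sub_one (hp₀ : 0 ≤ p) (hp₁ : p ≤ 1)
    (hη : ∀ q ∈ Set.Ici ((1, 2) : ℕ × ℕ), η q ∈ Set.Ioo (q.1 : ℝ) (q.1 + 1))
    (hξ : ∀ q ∈ Set.Ici ((1, 2) : ℕ × ℕ), ξ q ∈ Set.Ioo (q.1 + q.2 : ℝ) (q.1 + q.2 + 1)) :
    (fun q ↦ (q.2 / (ξ q - η q)) ^ p - 1) =O[𝓟 (Set.Ici (1, 2))] offDiagError p := by
  refine .trans (.of_bound 2 (eventually_principal.2 fun q hq ↦ ?_))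
    (isBigO_inv_offDiagError p _)
  obtain ⟨hkη, hηk⟩ := hη q hq
  obtain ⟨hlξ, hξl⟩ := hξ q hq
  have hm : (2 : ℝ) ≤ q.2 := by exact_mod_cast hq.2
  have hgap : 0 < ξ q - η q := by linarith
  rw [Real.norm_eq_abs, Real.norm_of_nonneg (by positivity)]
  calc |(q.2 / (ξ q - η q)) ^ p - 1| ≤ |q.2 / (ξ q - η q) - 1| :=
        abs_rpow_sub_one_le (by positivity) hp₀ hp₁
    _ = |q.2 - (ξ q - η q)| / (ξ q - η q) := by
        rw [div_sub_one hgap.ne', abs_div, abs_of_pos hgap]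
    _ ≤ 1 / (q.2 / 2 : ℝ) := by
        gcongr
        · exact abs_le.2 ⟨by linarith, by linarith⟩
        · linarith
    _ = 2 * (q.2 : ℝ)⁻¹ := by rw [one_div_div, div_eq_mul_inv]

lemma isBigO_rpow_gap_div (hp : 0 ≤ p)
    (hη : ∀ q ∈ Set.Ici ((1, 2) : ℕ × ℕ), η q ∈ Set.Ioo (q.1 : ℝ) (q.1 + 1))
    (hξ : ∀ q ∈ Set.Ici ((1, 2) : ℕ × ℕ), ξ q ∈ Set.Ioo (q.1 + q.2 : ℝ) (q.1 + q.2 + 1)) :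
    (fun q ↦ ((ξ q / η q - 1) / (ξ q / η q)) ^ p) =O[𝓟 (Set.Ici (1, 2))] offDiagError p := by
  refine .trans (.of_bound (2 ^ p) (eventually_principal.2 fun q hq ↦ ?_))
    (isBigO_rpow_offDiagError p _)
  obtain ⟨hkη, hηk⟩ := hη q hq
  obtain ⟨hlξ, hξl⟩ := hξ q hq
  have hk : (1 : ℝ) ≤ q.1 := by exact_mod_cast hq.1
  have hm : (2 : ℝ) ≤ q.2 := by exact_mod_cast hq.2
  have hη₀ : 0 < η q := by linarith
  have hratio : (ξ q / η q - 1) / (ξ q / η q) = (ξ q - η q) / ξ q := by field_simp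
  have hgap : 0 ≤ (ξ q - η q) / ξ q := div_nonneg (by linarith) (by linarith)
  rw [hratio, Real.norm_of_nonneg (by positivity), Real.norm_of_nonneg (by positivity),
    ← Real.mul_rpow two_pos.le (by positivity)]
  refine Real.rpow_le_rpow hgap ?_ hp
  rw [mul_div]
  gcongr
  linarith

lemma isBigO_rpow_fst_div_sub_one (hp : p ≤ 1) (hγ₀ : 0 ≤ γ) (hγ₁ : γ ≤ 1) :
    (fun q : ℕ × ℕ ↦ (q.1 / (q.1 + q.2 : ℝ)) ^ γ - 1) =O[𝓟 (Set.Ici (1, 1))]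
      offDiagError p := by
  refine .trans (.of_bound' (eventually_principal.2 fun q hq ↦ ?_)) (isBigO_div_offDiagError hp)
  have hk : (0 : ℝ) < q.1 := by exact_mod_cast hq.1
  rw [Real.norm_eq_abs, Real.norm_of_nonneg (by positivity)]
  calc |(q.1 / (q.1 + q.2 : ℝ)) ^ γ - 1| ≤ |q.1 / (q.1 + q.2 : ℝ) - 1| :=
        abs_rpow_sub_one_le (by positivity) hγ₀ hγ₁
    _ = q.2 / (q.1 + q.2 : ℝ) := by
        rw [div_sub_one (by positivity), abs_div, sub_add_cancel_left, abs_neg, Nat.abs_cast,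
          abs_of_pos (by positivity)]

end OffDiagonal

section LogarithmicSums

open Asymptotics Topology

lemma mul_rpow_sub_one_le_rpow_sub_rpow {x p : ℝ} (hx : 0 ≤ x) (hp₀ : 0 ≤ p) (hp₁ : p ≤ 1) :
    p * (x + 1) ^ (p - 1) ≤ (x + 1) ^ p - x ^ p := by
  have hx₁ : 0 < x + 1 := by linarith
  have bernoulli : (x / (x + 1)) ^ p ≤ 1 - p / (x + 1) := by
    have h := rpow_one_add_le_one_add_mul_self (s := -(1 / (x + 1)))
      (neg_le_neg ((div_le_one hx₁).2 (by linarith))) hp₀ hp₁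
    convert h using 1
    · congr 1
      field_simp
      ring
    · ring
  rw [Real.div_rpow hx hx₁.le, div_le_iff₀ (Real.rpow_pos_of_pos hx₁ _)] at bernoulli
  rw [Real.rpow_sub_one hx₁.ne']
  linarith [show (1 - p / (x + 1)) * (x + 1) ^ p
    = (x + 1) ^ p - p * ((x + 1) ^ p / (x + 1)) by ring]

lemma sum_Icc_rpow_sub_one_le {p : ℝ} (hp₀ : 0 < p) (hp₁ : p ≤ 1) (N : ℕ) :
    ∑ m ∈ Finset.Icc 1 N, (m : ℝ) ^ (p - 1) ≤ (N : ℝ) ^ p / p := by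
  induction N with
  | zero => simp [hp₀.ne']
  | succ N ih =>
    rw [Finset.sum_Icc_succ_top (by omega), le_div_iff₀ hp₀]
    rw [le_div_iff₀ hp₀] at ih
    push_cast
    linarith [mul_rpow_sub_one_le_rpow_sub_rpow N.cast_nonneg hp₀.le hp₁]

lemma sum_Icc_inv_sq_le (N : ℕ) : ∑ m ∈ Finset.Icc 1 N, ((m : ℝ) ^ 2)⁻¹ ≤ 2 := by
  have hIcc : Finset.Icc 1 N = Finset.Ioo 0 (N + 1) := by
    ext
    simp only [Finset.mem_Icc, Finset.mem_Ioo]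
    omega
  simpa [hIcc] using sum_Ioo_inv_sq_le (α := ℝ) 0 (N + 1)

lemma abs_sum_sub_mul_harmonic_le {f : ℕ → ℝ} {c C p : ℝ} (hC : 0 ≤ C) (hp₀ : 0 < p) (hp₁ : p ≤ 1)
    {N : ℕ} (hf : ∀ m ∈ Finset.Icc 1 N,
      |m * f m - c| ≤ C * ((m : ℝ)⁻¹ + (m / (N + 1 : ℝ)) ^ p)) :
    |∑ m ∈ Finset.Icc 1 N, f m - c * (harmonic N : ℝ)| ≤ C * (2 + 1 / p) := by
  have harmonic_eq : c * (harmonic N : ℝ) = ∑ m ∈ Finset.Icc 1 N, c * (m : ℝ)⁻¹ := by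
    rw [harmonic_eq_sum_Icc, ← Finset.mul_sum]
    push_cast
    rfl
  have term_le : ∀ m ∈ Finset.Icc 1 N, |f m - c * (m : ℝ)⁻¹| ≤
      C * (((m : ℝ) ^ 2)⁻¹ + (m : ℝ) ^ (p - 1) / (N + 1 : ℝ) ^ p) := fun m hm ↦ by
    have hm₀ : (0 : ℝ) < m := by exact_mod_cast (Finset.mem_Icc.1 hm).1
    calc |f m - c * (m : ℝ)⁻¹| = |m * f m - c| * (m : ℝ)⁻¹ := by
          rw [← abs_of_pos (inv_pos.2 hm₀), ← abs_mul, abs_of_pos (inv_pos.2 hm₀)]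
          congr 1
          field_simp
      _ ≤ C * ((m : ℝ)⁻¹ + (m / (N + 1 : ℝ)) ^ p) * (m : ℝ)⁻¹ := by gcongr; exact hf m hm
      _ = _ := by
          rw [Real.div_rpow hm₀.le (by positivity), Real.rpow_sub_one hm₀.ne']
          field_simp
  have hN : (∑ m ∈ Finset.Icc 1 N, (m : ℝ) ^ (p - 1)) / (N + 1 : ℝ) ^ p ≤ 1 / p := by
    rw [div_le_iff₀ (by positivity), one_div_mul_eq_div]
    refine (sum_Icc_rpow_sub_one_le hp₀ hp₁ N).trans ?_
    gcongr
    linarith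
  rw [harmonic_eq, ← Finset.sum_sub_distrib]
  calc _ ≤ _ := (Finset.abs_sum_le_sum_abs _ _).trans (Finset.sum_le_sum term_le)
    _ = C * (∑ m ∈ Finset.Icc 1 N, ((m : ℝ) ^ 2)⁻¹ +
          (∑ m ∈ Finset.Icc 1 N, (m : ℝ) ^ (p - 1)) / (N + 1 : ℝ) ^ p) := by
        rw [← Finset.mul_sum, Finset.sum_add_distrib, Finset.sum_div]
    _ ≤ C * (2 + 1 / p) := by gcongr; exact sum_Icc_inv_sq_le N

lemma sum_Icc_reflect {M : Type*} [AddCommMonoid M] (f : ℕ → M) (N : ℕ) :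
    ∑ m ∈ Finset.Icc 1 N, f (N + 1 - m) = ∑ k ∈ Finset.Icc 1 N, f k := by
  refine Finset.sum_nbij' (N + 1 - ·) (N + 1 - ·) ?_ ?_ ?_ ?_ fun _ _ ↦ rfl <;>
    simp only [Finset.mem_Icc] <;> omega

lemma sum_sum_Icc_succ_of_symm {R : Type*} [CommSemiring R] {g : ℕ → ℕ → R}
    (hsymm : ∀ k l, g k l = g l k) (N : ℕ) :
    ∑ k ∈ Finset.Icc 1 (N + 1), ∑ l ∈ Finset.Icc 1 (N + 1), g k l =
      ∑ k ∈ Finset.Icc 1 N, ∑ l ∈ Finset.Icc 1 N, g k l +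
        2 * ∑ k ∈ Finset.Icc 1 N, g k (N + 1) + g (N + 1) (N + 1) := by
  simp only [Finset.sum_Icc_succ_top (Nat.le_add_left 1 N), Finset.sum_add_distrib, hsymm (N + 1)]
  ring

lemma abs_sum_sum_sub_mul_harmonic_le {g : ℕ → ℕ → ℝ} {c d D : ℝ} (hsymm : ∀ k l, g k l = g l k)
    (hdiag : ∀ k, g k k = d)
    (hrow : ∀ N : ℕ, |∑ k ∈ Finset.Icc 1 N, g k (N + 1) - c * (harmonic N : ℝ)| ≤ D) (N : ℕ) :
    |∑ k ∈ Finset.Icc 1 N, ∑ l ∈ Finset.Icc 1 N, g k l - 2 * c * (N * (harmonic N : ℝ))| ≤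
      (2 * D + |d - 2 * c|) * N := by
  induction N with
  | zero => simp
  | succ N ih =>
    have harmonic_step : ((N + 1 : ℕ) : ℝ) * (harmonic (N + 1) : ℝ) =
        N * (harmonic N : ℝ) + (harmonic N : ℝ) + 1 := by
      rw [harmonic_succ]
      push_cast
      field_simp
    rw [sum_sum_Icc_succ_of_symm hsymm, harmonic_step, hdiag]
    have row := abs_le.1 (hrow N)
    have diag := abs_le.1 (le_refl |d - 2 * c|)
    rw [abs_le] at ih ⊢
    push_cast
    constructor <;> linarith [ih.1, ih.2, row.1, row.2, diag.1, diag.2]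

lemma isBigO_sum_sum_sub_mul_harmonic {g : ℕ → ℕ → ℝ} {c d p : ℝ} (hp₀ : 0 < p) (hp₁ : p ≤ 1)
    (hsymm : ∀ k l, g k l = g l k) (hdiag : ∀ k, g k k = d)
    (hg : (fun q : ℕ × ℕ ↦ q.2 * g q.1 (q.1 + q.2) - c) =O[𝓟 (Set.Ici (1, 1))]
      offDiagError p) :
    (fun N : ℕ ↦ ∑ k ∈ Finset.Icc 1 N, ∑ l ∈ Finset.Icc 1 N, g k l -
      2 * c * (N * (harmonic N : ℝ))) =O[atTop] fun N ↦ (N : ℝ) := by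
  obtain ⟨C, hC, bound⟩ := hg.exists_nonneg
  simp only [isBigOWith_principal, Real.norm_eq_abs] at bound
  suffices hrow : ∀ N : ℕ,
      |∑ k ∈ Finset.Icc 1 N, g k (N + 1) - c * (harmonic N : ℝ)| ≤ C * (2 + 1 / p) from
    .of_bound (2 * (C * (2 + 1 / p)) + |d - 2 * c|) <| .of_forall fun N ↦ by
      simpa using abs_sum_sum_sub_mul_harmonic_le hsymm hdiag hrow N
  intro N
  rw [← sum_Icc_reflect]
  refine abs_sum_sub_mul_harmonic_le hC hp₀ hp₁ fun m hm ↦ ?_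
  obtain ⟨hm₁, hmN⟩ := Finset.mem_Icc.1 hm
  have h := bound (N + 1 - m, m) (Prod.mk_le_mk.2 ⟨by omega, hm₁⟩)
  rw [abs_of_nonneg (offDiagError_nonneg p _), offDiagError] at h
  have hsub : ((N + 1 - m : ℕ) : ℝ) + m = N + 1 := by
    exact_mod_cast Nat.sub_add_cancel (show m ≤ N + 1 by omega)
  simpa only [hsub, Nat.sub_add_cancel (show m ≤ N + 1 by omega)] using h

lemma tendsto_harmonic_div_log :
    Tendsto (fun N : ℕ ↦ (harmonic N : ℝ) / Real.log N) atTop (𝓝 1) := by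
  have hlog : Tendsto (fun N : ℕ ↦ Real.log N) atTop atTop :=
    Real.tendsto_log_atTop.comp tendsto_natCast_atTop_atTop
  have h := (Real.tendsto_harmonic_sub_log.div_atTop hlog).add_const 1
  rw [zero_add] at h
  refine h.congr' ?_
  filter_upwards [hlog.eventually_ne_atTop 0] with N hN
  rw [sub_div, div_self hN, sub_add_cancel]

lemma tendsto_div_mul_log_of_isBigO {S : ℕ → ℝ} {c : ℝ}
    (hS : (fun N : ℕ ↦ S N - c * (N * (harmonic N : ℝ))) =O[atTop] fun N ↦ (N : ℝ)) :
    Tendsto (fun N : ℕ ↦ S N / (N * Real.log N)) atTop (𝓝 c) := by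
  have hlog : Tendsto (fun N : ℕ ↦ Real.log N) atTop atTop :=
    Real.tendsto_log_atTop.comp tendsto_natCast_atTop_atTop
  have herr : Tendsto (fun N : ℕ ↦ (S N - c * (N * (harmonic N : ℝ))) / (N * Real.log N))
      atTop (𝓝 0) := by
    refine (hS.trans_isLittleO ?_).tendsto_div_nhds_zero
    simpa using (isBigO_refl (fun N : ℕ ↦ (N : ℝ)) atTop).mul_isLittleO
      ((isLittleO_const_left (c := (1 : ℝ))).2 (.inr (tendsto_norm_atTop_atTop.comp hlog)))
  have h := herr.add (tendsto_harmonic_div_log.const_mul c)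
  rw [zero_add, mul_one] at h
  refine h.congr' ?_
  filter_upwards [eventually_ne_atTop 0] with N hN
  field_simp
  ring

lemma tendsto_log_div_log_of_tendsto_div {ι : Type*} {l : Filter ι} {u v : ι → ℝ} {x : ℝ}
    (hx : x ≠ 0) (hv : Tendsto v l atTop) (huv : Tendsto (fun i ↦ u i / v i) l (𝓝 x)) :
    Tendsto (fun i ↦ Real.log (u i) / Real.log (v i)) l (𝓝 1) := by
  have hlog : Tendsto (fun i ↦ Real.log (v i)) l atTop := Real.tendsto_log_atTop.comp hv
  have h := ((huv.log hx).div_atTop hlog).add_const 1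
  rw [zero_add] at h
  refine h.congr' ?_
  filter_upwards [huv.eventually_ne hx, hlog.eventually_ne_atTop 0] with i huvi hlogi
  obtain ⟨hu, hv⟩ := div_ne_zero_iff.1 huvi
  rw [Real.log_div hu hv, sub_div, div_self hlogi, sub_add_cancel]

lemma tendsto_comp_floor_div_mul_log {S : ℕ → ℝ} {c x : ℝ} (hx : 0 < x)
    (hS : Tendsto (fun N : ℕ ↦ S N / (N * Real.log N)) atTop (𝓝 c)) :
    Tendsto (fun d : ℕ ↦ S ⌊(d : ℝ) * x⌋₊ / (d * Real.log d)) atTop (𝓝 (c * x)) := by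
  have hfloor : Tendsto (fun d : ℕ ↦ ⌊(d : ℝ) * x⌋₊) atTop atTop :=
    tendsto_nat_floor_atTop.comp (tendsto_natCast_atTop_atTop.atTop_mul_const hx)
  have hratio : Tendsto (fun d : ℕ ↦ (⌊(d : ℝ) * x⌋₊ : ℝ) / d) atTop (𝓝 x) := by
    simpa only [Function.comp_def, mul_comm x] using
      (tendsto_nat_floor_mul_div_atTop hx.le).comp tendsto_natCast_atTop_atTop
  have h := ((hS.comp hfloor).mul hratio).mul
    (tendsto_log_div_log_of_tendsto_div hx.ne' tendsto_natCast_atTop_atTop hratio)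
  rw [mul_one] at h
  refine h.congr' ?_
  filter_upwards [hfloor.eventually_gt_atTop 1] with d hd
  have hd' : (1 : ℝ) < ⌊(d : ℝ) * x⌋₊ := by exact_mod_cast hd
  have hlog := Real.log_pos hd'
  simp only [Function.comp_apply]
  field_simp

end LogarithmicSums

/-- The profile `H` of the mixed derivative of the covariance: the homogeneous function
`R(s,t) = s ^ (2β) φ(t / s)` satisfies `∂²R/∂s∂t = s ^ (2β - 2) H(t / s)` for `0 < s < t`. -/
def mixedDerivProfile (β : ℝ) (φ : ℝ → ℝ) (y : ℝ) : ℝ :=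
  (2 * β - 1) * deriv φ y - y * deriv (deriv φ) y

section Covariance

variable {β : ℝ} {φ : ℝ → ℝ} {s t : ℝ}

lemma covR_comm (β : ℝ) (φ : ℝ → ℝ) (s t : ℝ) : covR β φ s t = covR β φ t s := by
  simp only [covR, min_comm s t, max_comm s t, or_comm]

lemma covR_of_le (hs : 0 < s) (hst : s ≤ t) : covR β φ s t = s ^ (2 * β) * φ (t / s) := by
  rw [covR, if_neg (not_or.2 ⟨hs.ne', (hs.trans_le hst).ne'⟩), min_eq_left hst, max_eq_right hst]

lemma covR_self (hs : 0 < s) : covR β φ s s = s ^ (2 * β) * φ 1 := by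
  rw [covR_of_le hs le_rfl, div_self hs.ne']

lemma covδ_comm (β : ℝ) (φ : ℝ → ℝ) (k l : ℕ) : covδ β φ k l = covδ β φ l k := by
  have covΔ_comm : covΔ β φ k l = covΔ β φ l k := by
    rw [covΔ, covΔ, covR_comm β φ l k, covR_comm β φ (l + 1), covR_comm β φ l,
      covR_comm β φ (l + 1)]
    ring
  rw [covδ, covδ, covΔ_comm, mul_comm (covΔ β φ k k)]

lemma covδ_sq {k l : ℕ} (hk : 0 ≤ covΔ β φ k k) (hl : 0 ≤ covΔ β φ l l) :
    covδ β φ k l ^ 2 = covΔ β φ k l ^ 2 / (covΔ β φ k k * covΔ β φ l l) := by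
  rw [covδ, div_pow, Real.sq_sqrt (mul_nonneg hk hl)]

lemma covδ_self_sq {k : ℕ} (hk : 0 < covΔ β φ k k) : covδ β φ k k ^ 2 = 1 := by
  rw [covδ_sq hk.le hk.le, ← sq, div_self (pow_pos hk 2).ne']

lemma hasDerivAt_rpow_mul_comp_div {p f' : ℝ} {f : ℝ → ℝ} (hs : 0 < s)
    (hf : HasDerivAt f f' (t / s)) :
    HasDerivAt (fun s ↦ s ^ p * f (t / s)) (s ^ (p - 1) * (p * f (t / s) - t / s * f')) s := by
  have hdiv : HasDerivAt (fun s ↦ t / s) (-t / s ^ 2) s := by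
    simpa [div_eq_mul_inv] using (hasDerivAt_inv hs.ne').const_mul t
  refine ((Real.hasDerivAt_rpow_const (p := p) (.inl hs.ne')).mul
    (hf.comp s hdiv)).congr_deriv ?_
  rw [Real.rpow_sub_one hs.ne']
  simp only [Function.comp_apply]
  field_simp
  ring

lemma exists_covΔ_eq_mixedDerivProfile (hφ : ∀ y, 1 < y → DifferentiableAt ℝ φ y)
    (hφ' : ∀ y, 1 < y → DifferentiableAt ℝ (deriv φ) y) {k l : ℕ} (hk : 1 ≤ k) (hkl : k + 2 ≤ l) :
    ∃ η ∈ Set.Ioo (k : ℝ) (k + 1), ∃ ξ ∈ Set.Ioo (l : ℝ) (l + 1),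
      covΔ β φ k l = η ^ (2 * β - 2) * mixedDerivProfile β φ (ξ / η) := by
  have hk' : (1 : ℝ) ≤ k := by exact_mod_cast hk
  have hkl' : (k : ℝ) + 2 ≤ l := by exact_mod_cast hkl
  have one_lt_ratio : ∀ s ∈ Set.Icc (k : ℝ) (k + 1), ∀ t ∈ Set.Icc (l : ℝ) (l + 1),
      0 < s ∧ 1 < t / s := fun s hs t ht ↦ by
    have hs₀ : 0 < s := by linarith [hs.1]
    exact ⟨hs₀, (one_lt_div hs₀).2 (by linarith [hs.2, ht.1])⟩
  obtain ⟨η, hη, ξ, hξ, hmixed⟩ := exists_mixed_difference_eq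
    (F := fun s t ↦ s ^ (2 * β) * φ (t / s))
    (F₂ := fun s t ↦ s ^ (2 * β - 1) * deriv φ (t / s))
    (F₁₂ := fun s t ↦ s ^ (2 * β - 2) * mixedDerivProfile β φ (t / s))
    (lt_add_one (k : ℝ)) (lt_add_one (l : ℝ))
    (fun s hs t ht ↦ by
      obtain ⟨hs₀, hts⟩ := one_lt_ratio s hs t ht
      refine (((hφ _ hts).hasDerivAt.comp t ((hasDerivAt_id t).div_const s)).const_mul
        (s ^ (2 * β))).congr_deriv ?_
      rw [Real.rpow_sub_one hs₀.ne']
      ring)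
    (fun s hs t ht ↦ by
      obtain ⟨hs₀, hts⟩ := one_lt_ratio s hs t ht
      refine (hasDerivAt_rpow_mul_comp_div hs₀ (hφ' _ hts).hasDerivAt).congr_deriv ?_
      rw [mixedDerivProfile, show 2 * β - 1 - 1 = 2 * β - 2 by ring])
  refine ⟨η, hη, ξ, hξ, ?_⟩
  rw [add_sub_cancel_left, add_sub_cancel_left, mul_one, mul_one] at hmixed
  rw [← hmixed, covΔ, covR_of_le, covR_of_le, covR_of_le, covR_of_le] <;> linarith

end Covariance

namespace SelfSimilarHyp

open Asymptotics Topology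

variable {β lam α ν y : ℝ} {φ ψ : ℝ → ℝ}

lemma lt_two (hyp : SelfSimilarHyp β lam α ν φ ψ) : α < 2 := by
  obtain ⟨⟨-, hβ⟩, -, ⟨-, hαβ⟩, -⟩ := hyp
  linarith

lemma psi_one (hyp : SelfSimilarHyp β lam α ν φ ψ) : ψ 1 = φ 1 := by
  obtain ⟨-, -, ⟨hα, -⟩, -, hφ, -⟩ := hyp
  simp [hφ 1 le_rfl, Real.zero_rpow hα.ne']

lemma hasDerivAt_psi (hyp : SelfSimilarHyp β lam α ν φ ψ) (hy : 1 ≤ y) :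
    HasDerivAt ψ (deriv ψ y) y := by
  obtain ⟨-, -, -, -, -, ⟨S, -, hS, hψ⟩, -⟩ := hyp
  exact (hψ y (hS hy)).1.hasDerivAt

lemma hasDerivAt_deriv_psi (hyp : SelfSimilarHyp β lam α ν φ ψ) (hy : 1 ≤ y) :
    HasDerivAt (deriv ψ) (deriv (deriv ψ) y) y := by
  obtain ⟨-, -, -, -, -, ⟨S, -, hS, hψ⟩, -⟩ := hyp
  exact (hψ y (hS hy)).2.hasDerivAt

lemma hasDerivAt_phi (hyp : SelfSimilarHyp β lam α ν φ ψ) (hy : 1 < y) :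
    HasDerivAt φ (-lam * (α * (y - 1) ^ (α - 1)) + deriv ψ y) y := by
  have hpow : HasDerivAt (fun z ↦ (z - 1) ^ α) (α * (y - 1) ^ (α - 1)) y := by
    simpa using ((hasDerivAt_id y).sub_const 1).rpow_const (p := α) (.inl (sub_pos.2 hy).ne')
  refine ((hpow.const_mul (-lam)).add (hyp.hasDerivAt_psi hy.le)).congr_of_eventuallyEq ?_
  obtain ⟨-, -, -, -, hφ, -⟩ := hyp
  filter_upwards [Ioi_mem_nhds hy] with z hz
  exact hφ z (le_of_lt hz)

lemma hasDerivAt_deriv_phi (hyp : SelfSimilarHyp β lam α ν φ ψ) (hy : 1 < y) :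
    HasDerivAt (deriv φ) (-lam * (α * ((α - 1) * (y - 1) ^ (α - 2))) + deriv (deriv ψ) y) y := by
  have hpow : HasDerivAt (fun z ↦ (z - 1) ^ (α - 1)) ((α - 1) * (y - 1) ^ (α - 2)) y := by
    have h := ((hasDerivAt_id y).sub_const 1).rpow_const (p := α - 1) (.inl (sub_pos.2 hy).ne')
    rw [show α - 1 - 1 = α - 2 by ring] at h
    simpa using h
  refine (((hpow.const_mul α).const_mul (-lam)).add
    (hyp.hasDerivAt_deriv_psi hy.le)).congr_of_eventuallyEq ?_
  filter_upwards [Ioi_mem_nhds hy] with z hz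
  exact (hyp.hasDerivAt_phi hz).deriv

lemma isBigO_mul_deriv_deriv_psi (hyp : SelfSimilarHyp β lam α ν φ ψ) :
    (fun y ↦ y * deriv (deriv ψ) y) =O[𝓟 (Set.Ioi 1)] fun y ↦ (y - 1) ^ (α - 1) := by
  obtain ⟨-, -, -, -, -, -, ⟨C₀, -, -, hψ''⟩, -⟩ := hyp
  refine .of_bound C₀ (eventually_principal.2 fun y hy ↦ ?_)
  have hy₀ : 0 < y := one_pos.trans hy
  have hpow : 0 ≤ (y - 1) ^ (α - 1) := Real.rpow_nonneg (sub_nonneg.2 (le_of_lt hy)) _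
  rw [norm_mul, Real.norm_of_nonneg hy₀.le, Real.norm_of_nonneg hpow, Real.norm_eq_abs]
  calc y * |deriv (deriv ψ) y| ≤ y * (C₀ * y⁻¹ * (y - 1) ^ (α - 1)) := by
        gcongr
        exact hψ'' y hy
    _ = C₀ * (y - 1) ^ (α - 1) := by field_simp

lemma isBigO_deriv_deriv_psi_one (hyp : SelfSimilarHyp β lam α ν φ ψ) (hα : 1 ≤ α) :
    (fun y ↦ deriv (deriv ψ) y) =O[𝓟 (Set.Ioi 1)] fun _ ↦ (1 : ℝ) := by
  have hpow : (fun y : ℝ ↦ (y - 1) ^ (α - 1)) =O[𝓟 (Set.Ioi 1)] fun y ↦ y := by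
    refine .of_bound 1 (eventually_principal.2 fun y (hy : 1 < y) ↦ ?_)
    have hy₁ : 0 ≤ y - 1 := by linarith
    rw [Real.norm_of_nonneg (by positivity), Real.norm_of_nonneg (by positivity), one_mul]
    calc (y - 1) ^ (α - 1) ≤ y ^ (α - 1) :=
          Real.rpow_le_rpow hy₁ (by linarith) (sub_nonneg.2 hα)
      _ ≤ y ^ (1 : ℝ) :=
          Real.rpow_le_rpow_of_exponent_le hy.le (by linarith [hyp.lt_two])
      _ = y := Real.rpow_one y
  refine ((isBigO_refl (fun y : ℝ ↦ y⁻¹) _).mul (hyp.isBigO_mul_deriv_deriv_psi.trans hpow)).congr'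
    ?_ ?_ <;>
  · refine eventually_principal.2 fun y (hy : 1 < y) ↦ ?_
    field_simp

lemma exists_abs_phi_one_add_sub_le (hyp : SelfSimilarHyp β lam α ν φ ψ) (hα : 1 ≤ α) :
    ∃ C, 0 ≤ C ∧ ∀ h, 0 ≤ h →
      |φ (1 + h) - (φ 1 + β * φ 1 * h - lam * h ^ α)| ≤ C * h ^ 2 := by
  obtain ⟨C, hC, hψ''⟩ := (hyp.isBigO_deriv_deriv_psi_one hα).exists_nonneg
  simp only [isBigOWith_principal, Real.norm_eq_abs, abs_one, mul_one] at hψ''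
  refine ⟨C, hC, fun h hh ↦ ?_⟩
  have taylor := abs_sub_sub_deriv_mul_le (a := 1) (x := 1 + h) (by linarith)
    (fun y hy ↦ hyp.hasDerivAt_psi hy.1) (fun y hy ↦ hyp.hasDerivAt_deriv_psi hy.1)
    (fun y hy ↦ hψ'' y hy.1)
  rw [hyp.psi_one, add_sub_cancel_left] at taylor
  have hψ₁ := hyp.psi_one
  obtain ⟨-, -, -, -, hφ, -, -, hψ'₁, -⟩ := hyp
  rw [hψ'₁ hα, hψ₁] at taylor
  rw [hφ (1 + h) (by linarith), add_sub_cancel_left]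
  convert taylor using 2
  ring

lemma rpow_mul_mixedDerivProfile_sub (hyp : SelfSimilarHyp β lam α ν φ ψ) (hy : 1 < y) :
    (y - 1) ^ (2 - α) * mixedDerivProfile β φ y - lam * (α * (α - 1)) =
      (y - 1) ^ (2 - α) * ((2 * β - 1) * (-lam * α * (y - 1) ^ (α - 1) + deriv ψ y) +
        lam * (α * (α - 1)) * (y - 1) ^ (α - 1) - y * deriv (deriv ψ) y) := by
  have hy₁ : 0 < y - 1 := sub_pos.2 hy
  have hsplit : (y - 1) ^ (α - 1) = (y - 1) * (y - 1) ^ (α - 2) := by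
    rw [show α - 1 = α - 2 + 1 by ring, Real.rpow_add_one hy₁.ne', mul_comm]
  have hcancel : (y - 1) ^ (2 - α) * (y - 1) ^ (α - 2) = 1 := by
    rw [← Real.rpow_add hy₁]
    simp
  rw [mixedDerivProfile, (hyp.hasDerivAt_phi hy).deriv, (hyp.hasDerivAt_deriv_phi hy).deriv,
    hsplit]
  linear_combination (lam * (α * (α - 1))) * hcancel

lemma isBigO_mixedDerivProfile_near_one (hyp : SelfSimilarHyp β lam α ν φ ψ) (hα : 1 ≤ α) :
    (fun y ↦ (y - 1) ^ (2 - α) * mixedDerivProfile β φ y - lam * (α * (α - 1)))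
      =O[𝓟 (Set.Ioc 1 2)] fun y ↦ (y - 1) ^ (2 - α) := by
  have hpow : (fun y : ℝ ↦ (y - 1) ^ (α - 1)) =O[𝓟 (Set.Ioc 1 2)] fun _ ↦ (1 : ℝ) := by
    refine .of_bound 1 (eventually_principal.2 fun y hy ↦ ?_)
    have hy₁ : 0 ≤ y - 1 := by linarith [hy.1]
    rw [Real.norm_of_nonneg (by positivity), norm_one, mul_one]
    exact Real.rpow_le_one hy₁ (by linarith [hy.2]) (sub_nonneg.2 hα)
  have hψ'' := (hyp.isBigO_mul_deriv_deriv_psi.mono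
    (principal_mono.2 Set.Ioc_subset_Ioi_self)).trans hpow
  have hψ' : deriv ψ =O[𝓟 (Set.Ioc 1 2)] fun _ ↦ (1 : ℝ) := by
    obtain ⟨-, -, -, -, -, -, ⟨C₀, hC₀, hψ', -⟩, -⟩ := hyp
    refine .of_bound (C₀ * 2 ^ (α - 1)) (eventually_principal.2 fun y hy ↦ ?_)
    rw [norm_one, mul_one]
    refine (hψ' y hy.1).trans ?_
    gcongr
    exacts [by linarith [hy.1], hy.2]
  have hbounded : (fun y ↦ (2 * β - 1) * (-lam * α * (y - 1) ^ (α - 1) + deriv ψ y) +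
      lam * (α * (α - 1)) * (y - 1) ^ (α - 1) - y * deriv (deriv ψ) y)
        =O[𝓟 (Set.Ioc 1 2)] fun _ ↦ (1 : ℝ) :=
    ((((hpow.const_mul_left _).add hψ').const_mul_left _).add (hpow.const_mul_left _)).sub hψ''
  refine ((isBigO_refl (fun y : ℝ ↦ (y - 1) ^ (2 - α)) _).mul hbounded).congr'
    (eventually_principal.2 fun y hy ↦ (hyp.rpow_mul_mixedDerivProfile_sub hy.1).symm) ?_
  simp only [mul_one, EventuallyEq.rfl]

lemma isBigO_mixedDerivProfile_far (hyp : SelfSimilarHyp β lam α ν φ ψ) (hα : 1 ≤ α) :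
    (fun y ↦ (y - 1) ^ (2 - α) * mixedDerivProfile β φ y - lam * (α * (α - 1)))
      =O[𝓟 (Set.Ici 2)] fun _ ↦ (1 : ℝ) := by
  obtain ⟨-, -, -, -, -, -, -, -, ⟨C₁, -, hφ⟩⟩ := hyp
  have hφ' : deriv φ =O[𝓟 (Set.Ici 2)] fun y ↦ (y - 1) ^ (α - 2) :=
    .of_bound C₁ (eventually_principal.2 fun y hy ↦
      ((hφ y hy).2 hα).1.trans_eq (by
        have : 0 ≤ y - 1 := by linarith [Set.mem_Ici.1 hy]
        rw [Real.norm_of_nonneg (by positivity)]))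
  have hφ'' : deriv (deriv φ) =O[𝓟 (Set.Ici 2)] fun y ↦ (y - 1) ^ (α - 3) :=
    .of_bound C₁ (eventually_principal.2 fun y hy ↦
      ((hφ y hy).2 hα).2.trans_eq (by
        have : 0 ≤ y - 1 := by linarith [Set.mem_Ici.1 hy]
        rw [Real.norm_of_nonneg (by positivity)]))
  have hid : (fun y : ℝ ↦ y) =O[𝓟 (Set.Ici 2)] fun y ↦ y - 1 :=
    .of_bound 2 (eventually_principal.2 fun y (hy : 2 ≤ y) ↦ by
      rw [Real.norm_of_nonneg (by linarith), Real.norm_of_nonneg (by linarith)]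
      linarith)
  have hyφ'' : (fun y ↦ y * deriv (deriv φ) y) =O[𝓟 (Set.Ici 2)] fun y ↦ (y - 1) ^ (α - 2) := by
    refine (hid.mul hφ'').congr' .rfl (eventually_principal.2 fun y (hy : 2 ≤ y) ↦ ?_)
    have hy₁ : 0 < y - 1 := by linarith
    simp only [show α - 3 = α - 2 - 1 by ring, Real.rpow_sub_one hy₁.ne',
      mul_div_cancel₀ _ hy₁.ne']
  have hH : mixedDerivProfile β φ =O[𝓟 (Set.Ici 2)] fun y ↦ (y - 1) ^ (α - 2) :=
    (hφ'.const_mul_left _).sub hyφ''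
  refine .sub ?_ (isBigO_const_const _ one_ne_zero _)
  refine ((isBigO_refl (fun y : ℝ ↦ (y - 1) ^ (2 - α)) _).mul hH).congr' .rfl
    (eventually_principal.2 fun y (hy : 2 ≤ y) ↦ ?_)
  have hy₁ : 0 < y - 1 := by linarith
  simp only [← Real.rpow_add hy₁, sub_add_sub_cancel, sub_self, Real.rpow_zero]

lemma isBigO_mixedDerivProfile (hyp : SelfSimilarHyp β lam α ν φ ψ) (hα : 1 ≤ α) :
    (fun y ↦ (y - 1) ^ (2 - α) * mixedDerivProfile β φ y - lam * (α * (α - 1)))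
      =O[𝓟 (Set.Ioi 1)] fun y ↦ ((y - 1) / y) ^ (2 - α) := by
  have hα₂ : 0 ≤ 2 - α := by linarith [hyp.lt_two]
  rw [← Set.Ioc_union_Ioi_eq_Ioi one_le_two, ← sup_principal]
  refine ((hyp.isBigO_mixedDerivProfile_near_one hα).trans ?_).sup
    (((hyp.isBigO_mixedDerivProfile_far hα).mono
      (principal_mono.2 Set.Ioi_subset_Ici_self)).trans ?_)
  · refine .of_bound (2 ^ (2 - α)) (eventually_principal.2 fun y hy ↦ ?_)
    have hy₀ : 0 < y := by linarith [hy.1]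
    have hy₁ : 0 ≤ y - 1 := by linarith [hy.1]
    rw [Real.norm_of_nonneg (by positivity), Real.norm_of_nonneg (by positivity),
      ← Real.mul_rpow two_pos.le (by positivity)]
    refine Real.rpow_le_rpow hy₁ ?_ hα₂
    rw [mul_div, le_div_iff₀ hy₀]
    nlinarith [hy.2]
  · refine .of_bound (2 ^ (2 - α)) (eventually_principal.2 fun y (hy : 2 < y) ↦ ?_)
    have hy₁ : 0 ≤ y - 1 := by linarith
    rw [norm_one, Real.norm_of_nonneg (by positivity), ← Real.mul_rpow two_pos.le (by positivity)]
    refine Real.one_le_rpow ?_ hα₂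
    rw [mul_div, le_div_iff₀ (by linarith)]
    linarith

lemma exists_abs_covR_sub_le (hyp : SelfSimilarHyp β lam α ν φ ψ) (hα : 1 ≤ α) :
    ∃ C, 0 ≤ C ∧ ∀ s t, 0 < s → s ≤ t →
      |covR β φ s t - (φ 1 * (s ^ (2 * β) + t ^ (2 * β)) / 2 -
        lam * (s ^ (2 * β - α) * (t - s) ^ α))| ≤ C * (s ^ (2 * β - 2) * (t - s) ^ 2) := by
  obtain ⟨C, hC, taylor_φ⟩ := hyp.exists_abs_phi_one_add_sub_le hα
  obtain ⟨⟨-, hβ⟩, -, ⟨-, hαβ⟩, -⟩ := hyp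
  refine ⟨C + |φ 1|, by positivity, fun s t hs hst ↦ ?_⟩
  obtain ⟨h, hh, rfl⟩ : ∃ h, 0 ≤ h ∧ t = s * (1 + h) :=
    ⟨(t - s) / s, div_nonneg (sub_nonneg.2 hst) hs.le, by field_simp; ring⟩
  have scale_α : s ^ (2 * β - α) * (s * h) ^ α = s ^ (2 * β) * h ^ α := by
    rw [Real.mul_rpow hs.le hh, ← mul_assoc, ← Real.rpow_add hs, sub_add_cancel]
  have scale_sq : s ^ (2 * β - 2) * (s * h) ^ 2 = s ^ (2 * β) * h ^ 2 := by
    rw [mul_pow, ← Real.rpow_natCast s 2, ← mul_assoc, ← Real.rpow_add hs]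
    simp
  have hs' : 0 ≤ s ^ (2 * β) := by positivity
  rw [covR_of_le hs hst, mul_div_cancel_left₀ _ hs.ne', Real.mul_rpow hs.le (by linarith),
    show s * (1 + h) - s = s * h by ring, scale_α, scale_sq]
  calc _ = s ^ (2 * β) * |(φ (1 + h) - (φ 1 + β * φ 1 * h - lam * h ^ α)) -
          φ 1 / 2 * ((1 + h) ^ (2 * β) - 1 - 2 * β * h)| := by
        rw [← abs_of_nonneg hs', ← abs_mul, abs_of_nonneg hs']
        ring_nf
    _ ≤ s ^ (2 * β) * (C * h ^ 2 + |φ 1| / 2 * (2 * h ^ 2)) := by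
        gcongr
        refine (abs_sub _ _).trans (add_le_add (taylor_φ h hh) ?_)
        rw [abs_mul, abs_div, abs_two]
        gcongr
        exact abs_one_add_rpow_sub_le hh (by linarith) (by linarith)
    _ = (C + |φ 1|) * (s ^ (2 * β) * h ^ 2) := by ring

lemma isBigO_covΔ_self_div_sub (hyp : SelfSimilarHyp β lam α ν φ ψ) (hα : 1 ≤ α) :
    (fun k : ℕ ↦ covΔ β φ k k / k ^ (2 * β - α) - 2 * lam)
      =O[𝓟 (Set.Ici 1)] fun k ↦ (k : ℝ) ^ (-(2 - α)) := by
  obtain ⟨C, -, hR⟩ := hyp.exists_abs_covR_sub_le hα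
  refine .of_bound (2 * C) (eventually_principal.2 fun k (hk : 1 ≤ k) ↦ ?_)
  have hk₀ : (0 : ℝ) < k := by exact_mod_cast hk
  have hkγ : 0 < (k : ℝ) ^ (2 * β - α) := by positivity
  have h := hR k (k + 1) hk₀ (by linarith)
  rw [add_sub_cancel_left, Real.one_rpow, one_pow, mul_one, mul_one] at h
  have hΔ : |covΔ β φ k k - 2 * lam * k ^ (2 * β - α)| ≤ 2 * (C * k ^ (2 * β - 2)) := by
    rw [covΔ, covR_self hk₀, covR_self (by linarith), covR_comm β φ (k + 1), abs_le]
    constructor <;> linarith [(abs_le.1 h).1, (abs_le.1 h).2]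
  rw [Real.norm_eq_abs, Real.norm_of_nonneg (by positivity), div_sub' hkγ.ne', abs_div,
    abs_of_pos hkγ, div_le_iff₀ hkγ, mul_comm _ (2 * lam), mul_assoc (2 * C),
    ← Real.rpow_add hk₀, show -(2 - α) + (2 * β - α) = 2 * β - 2 by ring, mul_assoc 2 C]
  exact hΔ

lemma isBigO_inv_covΔ_self_div_sub (hyp : SelfSimilarHyp β lam α ν φ ψ) (hα : 1 ≤ α)
    (hΔ : ∀ k, 0 < covΔ β φ k k) :
    (fun k : ℕ ↦ (covΔ β φ k k / k ^ (2 * β - α))⁻¹ - (2 * lam)⁻¹)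
      =O[𝓟 (Set.Ici 1)] fun k ↦ (k : ℝ) ^ (-(2 - α)) := by
  have hlam : 2 * lam ≠ 0 := (mul_pos two_pos hyp.2.1).ne'
  have hdiag := hyp.isBigO_covΔ_self_div_sub hα
  have hlim : Tendsto (fun k : ℕ ↦ covΔ β φ k k / k ^ (2 * β - α)) atTop (𝓝 (2 * lam)) :=
    tendsto_sub_nhds_zero_iff.1 <| (hdiag.mono (le_principal_iff.2 (Ici_mem_atTop 1))).trans_tendsto
      ((tendsto_rpow_neg_atTop (sub_pos.2 hyp.lt_two)).comp tendsto_natCast_atTop_atTop)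
  refine isBigO_inv_sub_inv hdiag ?_ ?_ hlam
  · exact ((hlim.inv₀ hlam).isBigO_one ℝ).nat_of_atTop (by simp)
  · refine eventually_principal.2 fun k (hk : 1 ≤ k) ↦ ?_
    exact (div_pos (hΔ k) (Real.rpow_pos_of_pos (by exact_mod_cast hk) _)).ne'

lemma isBigO_covΔ_succ (hyp : SelfSimilarHyp β lam α ν φ ψ) (hα : 1 ≤ α) :
    (fun k : ℕ ↦ covΔ β φ k (k + 1)) =O[𝓟 (Set.Ici 1)] fun k ↦ (k : ℝ) ^ (2 * β - α) := by
  obtain ⟨C, hC, hR⟩ := hyp.exists_abs_covR_sub_le hα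
  have hα₂ := hyp.lt_two
  obtain ⟨⟨-, hβ⟩, hlam, ⟨-, hαβ⟩, -⟩ := hyp
  refine .of_bound (4 * lam + 6 * C) (eventually_principal.2 fun k (hk : 1 ≤ k) ↦ ?_)
  have hk₁ : (1 : ℝ) ≤ k := by exact_mod_cast hk
  have hk₀ : (0 : ℝ) < k := by linarith
  have hkγ : 0 < (k : ℝ) ^ (2 * β - α) := by positivity
  have hk₁γ : 0 < ((k : ℝ) + 1) ^ (2 * β - α) := by positivity
  have succ_le : ((k : ℝ) + 1) ^ (2 * β - α) ≤ 2 * k ^ (2 * β - α) :=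
    add_one_rpow_le hk₁ (by linarith) (by linarith)
  have two_rpow_le : k ^ (2 * β - α) * (2 : ℝ) ^ α ≤ k ^ (2 * β - α) * 4 := by
    gcongr
    calc (2 : ℝ) ^ α ≤ 2 ^ (2 : ℝ) := Real.rpow_le_rpow_of_exponent_le one_le_two hα₂.le
      _ = 4 := by norm_num
  have err_le : (k : ℝ) ^ (2 * β - 2) ≤ k ^ (2 * β - α) :=
    Real.rpow_le_rpow_of_exponent_le hk₁ (by linarith)
  have err_succ_le : ((k : ℝ) + 1) ^ (2 * β - 2) ≤ k ^ (2 * β - 2) :=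
    Real.rpow_le_rpow_of_nonpos hk₀ (by linarith) (by linarith)
  have h₀₁ := hR k (k + 1) hk₀ (by linarith)
  have h₀₂ := hR k (k + 1 + 1) hk₀ (by linarith)
  have h₁₂ := hR (k + 1) (k + 1 + 1) (by linarith) (by linarith)
  rw [add_sub_cancel_left, Real.one_rpow, one_pow, mul_one, mul_one, abs_le] at h₀₁ h₁₂
  rw [show (k : ℝ) + 1 + 1 - k = 2 by ring, abs_le] at h₀₂
  rw [covΔ, Nat.cast_add_one, covR_self (by linarith), Real.norm_eq_abs,
    Real.norm_of_nonneg hkγ.le, abs_le]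
  constructor <;>
    linarith [h₀₁.1, h₀₁.2, h₀₂.1, h₀₂.2, h₁₂.1, h₁₂.2,
      mul_le_mul_of_nonneg_left succ_le hlam.le, mul_le_mul_of_nonneg_left two_rpow_le hlam.le,
      mul_le_mul_of_nonneg_left err_le hC, mul_le_mul_of_nonneg_left err_succ_le hC,
      mul_nonneg hlam.le hkγ.le, mul_nonneg hlam.le hk₁γ.le,
      mul_nonneg hlam.le (mul_nonneg hkγ.le (Real.rpow_nonneg two_pos.le α))]

lemma exists_covΔ_eq_mul_mixedDerivProfile (hyp : SelfSimilarHyp β lam α ν φ ψ) :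
    ∃ η ξ : ℕ × ℕ → ℝ, ∀ q ∈ Set.Ici ((1, 2) : ℕ × ℕ),
      η q ∈ Set.Ioo (q.1 : ℝ) (q.1 + 1) ∧ ξ q ∈ Set.Ioo (q.1 + q.2 : ℝ) (q.1 + q.2 + 1) ∧
      covΔ β φ q.1 (q.1 + q.2) = η q ^ (2 * β - 2) * mixedDerivProfile β φ (ξ q / η q) := by
  have hmean := fun (q : ℕ × ℕ) (hq : (1, 2) ≤ q) ↦ exists_covΔ_eq_mixedDerivProfile (β := β)
    (fun y hy ↦ (hyp.hasDerivAt_phi hy).differentiableAt)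
    (fun y hy ↦ (hyp.hasDerivAt_deriv_phi hy).differentiableAt)
    hq.1 (Nat.add_le_add_left hq.2 q.1)
  push_cast at hmean
  choose! η hη ξ hξ hΔ using hmean
  exact ⟨η, ξ, fun q hq ↦ ⟨hη q hq, hξ q hq, hΔ q hq⟩⟩

lemma isBigO_covΔ_mul_div_sub_of_two_le (hyp : SelfSimilarHyp β lam α ν φ ψ) (hα : 1 ≤ α) :
    (fun q : ℕ × ℕ ↦ (q.2 : ℝ) ^ (2 - α) * covΔ β φ q.1 (q.1 + q.2) / q.1 ^ (2 * β - α) -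
      lam * (α * (α - 1))) =O[𝓟 (Set.Ici (1, 2))] offDiagError (2 - α) := by
  obtain ⟨η, ξ, hηξ⟩ := hyp.exists_covΔ_eq_mul_mixedDerivProfile
  have hη := fun q hq ↦ (hηξ q hq).1
  have hξ := fun q hq ↦ (hηξ q hq).2.1
  have hp : 0 ≤ 2 - α := sub_nonneg.2 hyp.lt_two.le
  have hβ : β < 1 := hyp.1.2
  have hαβ : α ≤ 2 * β := hyp.2.2.1.2
  have pos_and_lt : ∀ q ∈ Set.Ici ((1, 2) : ℕ × ℕ), 0 < η q ∧ η q < ξ q := fun q hq ↦ by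
    have hm : (2 : ℝ) ≤ q.2 := by exact_mod_cast hq.2
    exact ⟨(Nat.cast_nonneg _).trans_lt (hη q hq).1, by linarith [(hη q hq).2, (hξ q hq).1]⟩
  have hprofile := ((hyp.isBigO_mixedDerivProfile hα).comp_tendsto
    (tendsto_principal_principal.2 fun q hq ↦
      (one_lt_div (pos_and_lt q hq).1).2 (pos_and_lt q hq).2)).trans
        (isBigO_rpow_gap_div hp hη hξ)
  have hE := (isBigO_offDiagError_one hp).mono
    (principal_mono.2 (Set.Ici_subset_Ici.2 (show ((1, 1) : ℕ × ℕ) ≤ (1, 2) by decide)))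
  have h := isBigO_mul_sub_mul hE (isBigO_mul_sub_mul hE
    (isBigO_rpow_div_fst_sub_one (γ := 2 * β - α) (by linarith) (by linarith) (by linarith) hη)
    (isBigO_rpow_snd_div_sub_one hp (by linarith) hη hξ)) hprofile
  refine h.congr' (eventually_principal.2 fun q hq ↦ ?_) .rfl
  obtain ⟨hη₀, hlt⟩ := pos_and_lt q hq
  have hgap : 0 < ξ q - η q := sub_pos.2 hlt
  have hη_pow : (η q) ^ (2 * β - 2) = η q ^ (2 * β - α) / η q ^ (2 - α) := by
    rw [← Real.rpow_sub hη₀]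
    ring_nf
  have hgap_pow := (Real.rpow_pos_of_pos hgap (2 - α)).ne'
  dsimp only
  rw [(hηξ q hq).2.2, hη_pow, div_sub_one hη₀.ne', Real.div_rpow hη₀.le (Nat.cast_nonneg _),
    Real.div_rpow (Nat.cast_nonneg _) hgap.le, Real.div_rpow hgap.le hη₀.le]
  field_simp

lemma isBigO_covΔ_mul_div_sub (hyp : SelfSimilarHyp β lam α ν φ ψ) (hα : 1 ≤ α) :
    (fun q : ℕ × ℕ ↦ (q.2 : ℝ) ^ (2 - α) * covΔ β φ q.1 (q.1 + q.2) / q.1 ^ (2 * β - α) -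
      lam * (α * (α - 1))) =O[𝓟 (Set.Ici (1, 1))] offDiagError (2 - α) := by
  have hsplit : Set.Ici ((1, 1) : ℕ × ℕ) = Set.Ici (1, 2) ∪ Set.Ici 1 ×ˢ {1} := by
    ext ⟨k, m⟩
    simp only [Set.mem_Ici, Prod.mk_le_mk, Set.mem_union, Set.mem_prod, Set.mem_singleton_iff]
    omega
  have one_isBigO : (fun _ ↦ (1 : ℝ)) =O[𝓟 (Set.Ici 1 ×ˢ {1})] offDiagError (2 - α) :=
    (isBigO_inv_offDiagError (2 - α) _).congr' (eventually_principal.2 fun q hq ↦ by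
      simp [show q.2 = 1 from hq.2]) .rfl
  rw [hsplit, ← sup_principal]
  refine (hyp.isBigO_covΔ_mul_div_sub_of_two_le hα).sup
    (.trans (.sub ?_ (isBigO_const_const _ one_ne_zero _)) one_isBigO)
  have hsucc := ((hyp.isBigO_covΔ_succ hα).comp_tendsto
    (tendsto_principal_principal.2 fun (q : ℕ × ℕ) (hq : q ∈ Set.Ici 1 ×ˢ {1}) ↦ hq.1)).mul
      (isBigO_refl (fun q ↦ ((q.1 : ℝ) ^ (2 * β - α))⁻¹) _)
  refine hsucc.congr' (eventually_principal.2 fun q hq ↦ ?_)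
    (eventually_principal.2 fun q hq ↦ ?_)
  · simp [show q.2 = 1 from hq.2, div_eq_mul_inv]
  · have hk : (0 : ℝ) < q.1 := by exact_mod_cast hq.1
    exact mul_inv_cancel₀ (Real.rpow_pos_of_pos hk _).ne'

lemma isBigO_covδ_sq_sub (hyp : SelfSimilarHyp β lam α ν φ ψ) (hα : 1 ≤ α)
    (hΔ : ∀ k, 0 < covΔ β φ k k) :
    (fun q : ℕ × ℕ ↦ ((q.2 : ℝ) ^ (2 - α) * covδ β φ q.1 (q.1 + q.2)) ^ 2 -
      (α * (α - 1) / 2) ^ 2) =O[𝓟 (Set.Ici (1, 1))] offDiagError (2 - α) := by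
  have hp : 0 ≤ 2 - α := sub_nonneg.2 hyp.lt_two.le
  have hβ : β < 1 := hyp.1.2
  have hαβ : α ≤ 2 * β := hyp.2.2.1.2
  have hlam : lam ≠ 0 := hyp.2.1.ne'
  have hE := isBigO_offDiagError_one hp
  have hoff := hyp.isBigO_covΔ_mul_div_sub hα
  have hdiag := hyp.isBigO_inv_covΔ_self_div_sub hα hΔ
  have hdiag_k := (hdiag.comp_tendsto (tendsto_principal_principal.2
    fun (q : ℕ × ℕ) (hq : (1, 1) ≤ q) ↦ hq.1)).trans
      (isBigO_rpow_neg_fst_offDiagError hp)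
  have hdiag_l := (hdiag.comp_tendsto (tendsto_principal_principal.2
    fun (q : ℕ × ℕ) (hq : (1, 1) ≤ q) ↦ le_add_right hq.1)).trans
      (isBigO_rpow_neg_add_offDiagError hp)
  have h := isBigO_mul_sub_mul hE (isBigO_mul_sub_mul hE (isBigO_mul_sub_mul hE hoff hoff)
    (isBigO_rpow_fst_div_sub_one (γ := 2 * β - α) (by linarith) (by linarith) (by linarith)))
    (isBigO_mul_sub_mul hE hdiag_k hdiag_l)
  refine h.congr' (eventually_principal.2 fun q hq ↦ ?_) .rfl
  have hk : (0 : ℝ) < q.1 := by exact_mod_cast hq.1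
  have hΔk := (hΔ q.1).ne'
  have hΔl := (hΔ (q.1 + q.2)).ne'
  dsimp only
  rw [mul_pow, covδ_sq (hΔ _).le (hΔ _).le, Real.div_rpow hk.le (by positivity), Nat.cast_add]
  field_simp

lemma isBigO_mul_covδ_sq_sub_of_threehalf (hyp : SelfSimilarHyp β lam (3 / 2) ν φ ψ)
    (hΔ : ∀ k, 0 < covΔ β φ k k) :
    (fun q : ℕ × ℕ ↦ q.2 * covδ β φ q.1 (q.1 + q.2) ^ 2 - 9 / 64)
      =O[𝓟 (Set.Ici (1, 1))] offDiagError (1 / 2) := by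
  have h := hyp.isBigO_covδ_sq_sub (by norm_num) hΔ
  rw [show (2 : ℝ) - 3 / 2 = 1 / 2 by norm_num] at h
  refine h.congr_left fun q ↦ ?_
  rw [mul_pow, ← Real.sqrt_eq_rpow, Real.sq_sqrt (Nat.cast_nonneg _)]
  norm_num

end SelfSimilarHyp

/-- if `α = 3/2` (so `β ∈ [3/4, 1)`), then
`lim_{d→∞} (1/(d ln d)) Σ_{k,l=1}^{⌊dx⌋} δ_{kl}² = 9x/32`. -/
theorem variance_limit_threehalf (β lam α ν : ℝ) (φ ψ : ℝ → ℝ)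
    (hyp : SelfSimilarHyp β lam α ν φ ψ)
    (hΔ : ∀ k : ℕ, 0 < covΔ β φ k k)
    (a b x : ℝ) (ha : 0 < a) (hab : a < b) (hx : x ∈ Set.Icc a b)
    (hα : α = 3 / 2) :
    Tendsto (fun d : ℕ =>
        (1 / ((d : ℝ) * Real.log d)) * ∑ k ∈ Finset.Icc 1 ⌊(d : ℝ) * x⌋₊,
          ∑ l ∈ Finset.Icc 1 ⌊(d : ℝ) * x⌋₊, covδ β φ k l ^ 2)
      atTop (nhds (9 * x / 32)) := by
  subst hα
  have hsum := tendsto_div_mul_log_of_isBigO (isBigO_sum_sum_sub_mul_harmonic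
    (g := fun k l ↦ covδ β φ k l ^ 2) one_half_pos one_half_lt_one.le
    (fun k l ↦ by rw [covδ_comm]) (fun k ↦ covδ_self_sq (hΔ k))
    (hyp.isBigO_mul_covδ_sq_sub_of_threehalf hΔ))
  convert tendsto_comp_floor_div_mul_log (ha.trans_le hx.1) hsum using 2
  · rw [one_div_mul_eq_div]
  · ring
end
end

section
/- Let f, g : [0,1]² → ℝ be continuous. Then lim_{d,p→∞} d·p · Σ_{k=0}^{d−1} Σ_{j=0}^{p−1} g(k/d, j/p) · (∫_{k/d}^{(k+1)/d} ∫_{j/p}^{(j+1)/p} f(u,v) dv du)² = ∫_0^1 ∫_0^1 g(u,v) f(u,v)² du dv, where the limit is taken as both d and p tend to infinity. -/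
open Filter intervalIntegral

/-!
By the mean value theorem the average of `f` over a cell is a value `f ξ` at a point `ξ` of that
cell, so the left-hand side is a Riemann sum for `x ↦ g x * f x ^ 2` in which `g` and `f` are
evaluated at two different points of the same cell. The function `(x, y) ↦ g x * f y ^ 2` is
uniformly continuous on the compact square of the domain, hence the two points may be moved
together at a cost that tends to zero with the mesh.
-/

section RiemannSums

open Set MeasureTheory Topology

variable {X Y E α ι κ : Type*} {s : Set X}

/-- The sets `c i`, `i ∈ t`, are the cells of a partition of `s` into finitely many measurable
pieces. Cells are indexed, and may be empty, so that the terms of Riemann sums can refer to `i`. -/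
structure IsMeasurablePartition [MeasurableSpace X] (s : Set X) (t : Finset ι) (c : ι → Set X) :
    Prop where
  measurableSet : ∀ i ∈ t, MeasurableSet (c i)
  pairwiseDisjoint : (t : Set ι).PairwiseDisjoint c
  biUnion_eq : ⋃ i ∈ t, c i = s

/-- The mesh of a finite family of cells: the largest diameter of a cell. -/
noncomputable def mesh [PseudoEMetricSpace X] (t : Finset ι) (c : ι → Set X) : ENNReal :=
  ⨆ i ∈ t, Metric.ediam (c i)

section Partition

variable {t : Finset ι} {c : ι → Set X}

theorem edist_le_mesh_of_mem_closure [PseudoEMetricSpace X] {i : ι} (hi : i ∈ t) {x y : X}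
    (hx : x ∈ closure (c i)) (hy : y ∈ closure (c i)) : edist x y ≤ mesh t c :=
  calc edist x y ≤ Metric.ediam (closure (c i)) := Metric.edist_le_ediam_of_mem hx hy
    _ = Metric.ediam (c i) := Metric.ediam_closure _
    _ ≤ mesh t c := le_iSup₂_of_le i hi le_rfl

theorem mesh_prod_le [PseudoEMetricSpace X] [PseudoEMetricSpace Y] (t : Finset ι) (u : Finset κ)
    (c : ι → Set X) (d : κ → Set Y) :
    mesh (t ×ˢ u) (fun i => c i.1 ×ˢ d i.2) ≤ max (mesh t c) (mesh u d) := by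
  refine iSup₂_le fun i hi => Metric.ediam_le fun x hx y hy => ?_
  obtain ⟨hit, hiu⟩ := Finset.mem_product.1 hi
  exact max_le_max
    (edist_le_mesh_of_mem_closure hit (subset_closure hx.1) (subset_closure hy.1))
    (edist_le_mesh_of_mem_closure hiu (subset_closure hx.2) (subset_closure hy.2))

namespace IsMeasurablePartition

variable [MeasurableSpace X] [MeasurableSpace Y]

theorem subset (h : IsMeasurablePartition s t c) {i : ι} (hi : i ∈ t) : c i ⊆ s :=
  h.biUnion_eq ▸ subset_biUnion_of_mem (u := c) hi

theorem prod {s' : Set Y} {u : Finset κ} {d : κ → Set Y} (hc : IsMeasurablePartition s t c)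
    (hd : IsMeasurablePartition s' u d) :
    IsMeasurablePartition (s ×ˢ s') (t ×ˢ u) (fun i => c i.1 ×ˢ d i.2) where
  measurableSet i hi := (hc.measurableSet _ (Finset.mem_product.1 hi).1).prod
    (hd.measurableSet _ (Finset.mem_product.1 hi).2)
  pairwiseDisjoint := by
    rw [Finset.coe_product]
    exact hc.pairwiseDisjoint.prod hd.pairwiseDisjoint
  biUnion_eq := by
    rw [← hc.biUnion_eq, ← hd.biUnion_eq]
    simpa only [Finset.mem_product, Finset.mem_coe, mem_prod] using
      biUnion_prod (t : Set ι) (u : Set κ) c d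

variable [NormedAddCommGroup E] [NormedSpace ℝ E] [CompleteSpace E] {μ : Measure X}

theorem norm_sum_measureReal_smul_sub_setIntegral_le (hc : IsMeasurablePartition s t c)
    (hs : μ s ≠ ⊤) {h : X → E} (hh : IntegrableOn h s μ) {v : ι → E} {ε : ℝ}
    (hv : ∀ i ∈ t, ∀ x ∈ c i, ‖v i - h x‖ ≤ ε) :
    ‖∑ i ∈ t, μ.real (c i) • v i - ∫ x in s, h x ∂μ‖ ≤ μ.real s * ε := by
  have hfin (i) (hi : i ∈ t) : μ (c i) ≠ ⊤ := measure_ne_top_of_subset (hc.subset hi) hs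
  have hint (i) (hi : i ∈ t) : IntegrableOn h (c i) μ := hh.mono_set (hc.subset hi)
  have hsum : ∑ i ∈ t, μ.real (c i) • v i - ∫ x in s, h x ∂μ =
      ∑ i ∈ t, ∫ x in c i, (v i - h x) ∂μ := by
    rw [← hc.biUnion_eq, integral_biUnion_finset t hc.measurableSet hc.pairwiseDisjoint hint,
      ← Finset.sum_sub_distrib]
    refine Finset.sum_congr rfl fun i hi => ?_
    have hconst : IntegrableOn (fun _ => v i) (c i) μ := integrableOn_const (hfin i hi)
    rw [MeasureTheory.integral_sub hconst (hint i hi), setIntegral_const]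
  have hmeas : μ.real s = ∑ i ∈ t, μ.real (c i) := by
    rw [← hc.biUnion_eq]
    exact measureReal_biUnion_finset hc.pairwiseDisjoint hc.measurableSet hfin
  rw [hsum, hmeas, Finset.sum_mul]
  refine norm_sum_le_of_le _ fun i hi => ?_
  rw [mul_comm]
  exact norm_setIntegral_le_of_norm_le_const (hfin i hi).lt_top (hv i hi)

end IsMeasurablePartition

theorem isMeasurablePartition_Ioc_of_monotone [LinearOrder X] [TopologicalSpace X]
    [OrderClosedTopology X] [MeasurableSpace X] [OpensMeasurableSpace X] {a : ℕ → X}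
    (ha : Monotone a) (n : ℕ) :
    IsMeasurablePartition (Ioc (a 0) (a n)) (Finset.range n) (fun k => Ioc (a k) (a (k + 1))) where
  measurableSet _ _ := measurableSet_Ioc
  pairwiseDisjoint := ha.pairwise_disjoint_on_Ioc_succ.set_pairwise _
  biUnion_eq := by simpa using ha.biUnion_Ico_Ioc_map_succ 0 n

end Partition

section Limit

variable [NormedAddCommGroup E] [NormedSpace ℝ E] [CompleteSpace E] [PseudoEMetricSpace X]
  [MeasurableSpace X] [OpensMeasurableSpace X] {μ : Measure X} [IsFiniteMeasureOnCompacts μ]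
  {l : Filter α} {t : α → Finset ι} {c : α → ι → Set X}

theorem tendsto_sum_measureReal_smul_of_mem_image (hs : IsCompact (closure s))
    (hc : ∀ᶠ n in l, IsMeasurablePartition s (t n) (c n))
    (hmesh : Tendsto (fun n => mesh (t n) (c n)) l (𝓝 0))
    {Φ : X × X → E} (hΦ : ContinuousOn Φ (closure s ×ˢ closure s)) {v : α → ι → E}
    (hv : ∀ᶠ n in l, ∀ i ∈ t n, v n i ∈ Φ '' (closure (c n i) ×ˢ closure (c n i))) :
    Tendsto (fun n => ∑ i ∈ t n, μ.real (c n i) • v n i) l (𝓝 (∫ x in s, Φ (x, x) ∂μ)) := by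
  have hμs : μ s ≠ ⊤ := measure_ne_top_of_subset subset_closure hs.measure_ne_top
  have hint : IntegrableOn (fun x => Φ (x, x)) s μ :=
    (ContinuousOn.integrableOn_compact' hs isClosed_closure.measurableSet
      (hΦ.comp (by fun_prop) fun x hx => ⟨hx, hx⟩)).mono_set subset_closure
  rw [Metric.tendsto_nhds]
  intro ε hε
  obtain ⟨η, hη, hηε⟩ : ∃ η > 0, μ.real s * η < ε := exists_pos_mul_lt hε (μ.real s)
  obtain ⟨δ, hδ, hΦδ⟩ := EMetric.uniformContinuousOn_iff.1
    ((hs.prod hs).uniformContinuousOn_of_continuous hΦ) (ENNReal.ofReal η) (by simpa using hη)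
  filter_upwards [hc, hv, hmesh.eventually_lt_const hδ] with n hcn hvn hδn
  rw [dist_eq_norm]
  refine (hcn.norm_sum_measureReal_smul_sub_setIntegral_le hμs hint ?_).trans_lt hηε
  intro i hi z hz
  obtain ⟨⟨x, y⟩, ⟨hx, hy⟩, hxy⟩ := hvn i hi
  have hcs : closure (c n i) ⊆ closure s := closure_mono (hcn.subset hi)
  have hz' := subset_closure hz
  have hdist : edist (x, y) (z, z) < δ :=
    (max_le (edist_le_mesh_of_mem_closure hi hx hz')
      (edist_le_mesh_of_mem_closure hi hy hz')).trans_lt hδn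
  have hΦxy := hΦδ ⟨hcs hx, hcs hy⟩ ⟨hcs hz', hcs hz'⟩ hdist
  rw [← hxy, ← dist_eq_norm]
  exact (edist_lt_ofReal.1 hΦxy).le

theorem tendsto_sum_measureReal_smul_comp_setAverage (hs : IsCompact (closure s))
    (hc : ∀ᶠ n in l, IsMeasurablePartition s (t n) (c n))
    (hmesh : Tendsto (fun n => mesh (t n) (c n)) l (𝓝 0))
    (hconn : ∀ᶠ n in l, ∀ i ∈ t n, IsConnected (c n i))
    (hpos : ∀ᶠ n in l, ∀ i ∈ t n, μ (c n i) ≠ 0)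
    {τ : α → ι → X} (hτ : ∀ᶠ n in l, ∀ i ∈ t n, τ n i ∈ closure (c n i))
    {f : X → ℝ} (hf : ContinuousOn f (closure s))
    {G : X × ℝ → E} (hG : ContinuousOn G (closure s ×ˢ univ)) :
    Tendsto (fun n => ∑ i ∈ t n, μ.real (c n i) • G (τ n i, ⨍ x in c n i, f x ∂μ)) l
      (𝓝 (∫ x in s, G (x, f x) ∂μ)) := by
  have hΦ : ContinuousOn (fun z : X × X => G (z.1, f z.2)) (closure s ×ˢ closure s) :=
    hG.comp (continuousOn_fst.prodMk (hf.comp continuousOn_snd fun z hz => hz.2))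
      fun z hz => ⟨hz.1, mem_univ _⟩
  have hμs : μ s ≠ ⊤ := measure_ne_top_of_subset subset_closure hs.measure_ne_top
  have hint : IntegrableOn f (closure s) μ :=
    hf.integrableOn_compact' hs isClosed_closure.measurableSet
  refine tendsto_sum_measureReal_smul_of_mem_image hs hc hmesh hΦ ?_
  filter_upwards [hc, hconn, hpos, hτ] with n hcn hconn hpos hτ i hi
  have hsub : c n i ⊆ closure s := (hcn.subset hi).trans subset_closure
  obtain ⟨ξ, hξ, hfξ⟩ := exists_eq_setAverage (hconn i hi) (hf.mono hsub) (hint.mono_set hsub)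
    (measure_ne_top_of_subset (hcn.subset hi) hμs) (hpos i hi)
  exact ⟨(τ n i, ξ), ⟨hτ i hi, subset_closure hξ⟩, by simp only [hfξ]⟩

end Limit

end RiemannSums

section UnitSquare

open Set MeasureTheory Topology

/-- The `k`-th of the `n` intervals of length `1 / n` dividing the unit interval. It is half-open,
so that these intervals partition `Ioc 0 1` and interval integrals are integrals over them. -/
def unitSubinterval (n k : ℕ) : Set ℝ :=
  Ioc ((k : ℝ) / n) (((k : ℝ) + 1) / n)

theorem div_lt_succ_div {n : ℕ} (hn : n ≠ 0) (k : ℕ) : (k : ℝ) / n < ((k : ℝ) + 1) / n := by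
  gcongr
  exact lt_add_one _

theorem isMeasurablePartition_unitSubinterval {n : ℕ} (hn : n ≠ 0) :
    IsMeasurablePartition (Ioc 0 1) (Finset.range n) (unitSubinterval n) := by
  have hmono : Monotone fun k : ℕ => (k : ℝ) / n := fun i j hij => by dsimp only; gcongr
  convert isMeasurablePartition_Ioc_of_monotone hmono n using 1
  · simp [hn]
  · ext k : 1
    simp [unitSubinterval]

theorem volume_unitSubinterval (n k : ℕ) :
    volume (unitSubinterval n k) = ENNReal.ofReal (n : ℝ)⁻¹ := by
  rw [unitSubinterval, Real.volume_Ioc, add_div, add_sub_cancel_left, one_div]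

theorem mesh_unitSubinterval_le (n : ℕ) :
    mesh (Finset.range n) (unitSubinterval n) ≤ ENNReal.ofReal (n : ℝ)⁻¹ :=
  iSup₂_le fun k _ => by
    rw [unitSubinterval, Real.ediam_Ioc, add_div, add_sub_cancel_left, one_div]

theorem tendsto_mesh_unitSubinterval :
    Tendsto (fun n => mesh (Finset.range n) (unitSubinterval n)) atTop (𝓝 0) :=
  tendsto_of_tendsto_of_tendsto_of_le_of_le tendsto_const_nhds
    (by simpa using ENNReal.tendsto_ofReal (tendsto_inv_atTop_nhds_zero_nat (𝕜 := ℝ)))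
    (fun _ => zero_le) mesh_unitSubinterval_le

theorem isConnected_unitSubinterval {n : ℕ} (hn : n ≠ 0) (k : ℕ) :
    IsConnected (unitSubinterval n k) :=
  isConnected_Ioc (div_lt_succ_div hn k)

theorem div_mem_closure_unitSubinterval {n : ℕ} (hn : n ≠ 0) (k : ℕ) :
    (k : ℝ) / n ∈ closure (unitSubinterval n k) := by
  have hlt := div_lt_succ_div hn k
  rw [unitSubinterval, closure_Ioc hlt.ne]
  exact left_mem_Icc.2 hlt.le

/-- The cell with index `(k, j)` of the subdivision of the unit square into `n.1 * n.2` congruent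
rectangles, half-open like `unitSubinterval`. -/
def gridCell (n i : ℕ × ℕ) : Set (ℝ × ℝ) :=
  unitSubinterval n.1 i.1 ×ˢ unitSubinterval n.2 i.2

theorem volume_gridCell (n i : ℕ × ℕ) :
    volume (gridCell n i) = ENNReal.ofReal ((n.1 : ℝ) * n.2)⁻¹ := by
  rw [gridCell, Measure.volume_eq_prod, Measure.prod_prod, volume_unitSubinterval,
    volume_unitSubinterval, ← ENNReal.ofReal_mul (by positivity), mul_inv]

theorem measureReal_gridCell (n i : ℕ × ℕ) :
    volume.real (gridCell n i) = ((n.1 : ℝ) * n.2)⁻¹ := by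
  rw [measureReal_def, volume_gridCell, ENNReal.toReal_ofReal (by positivity)]

theorem tendsto_mesh_gridCell :
    Tendsto (fun n => mesh (Finset.range n.1 ×ˢ Finset.range n.2) (gridCell n))
      (atTop ×ˢ atTop) (𝓝 0) := by
  have hmax := (tendsto_mesh_unitSubinterval.comp tendsto_fst).max
    (tendsto_mesh_unitSubinterval.comp (tendsto_snd (f := (atTop : Filter ℕ))))
  rw [max_self] at hmax
  exact tendsto_of_tendsto_of_tendsto_of_le_of_le tendsto_const_nhds hmax
    (fun _ => zero_le) fun _ => mesh_prod_le _ _ _ _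

theorem closure_Ioc_zero_one_prod_self :
    closure (Ioc (0 : ℝ) 1 ×ˢ Ioc (0 : ℝ) 1) = Icc 0 1 ×ˢ Icc 0 1 := by
  rw [closure_prod_eq, closure_Ioc zero_ne_one]

variable {E : Type*} [NormedAddCommGroup E] [NormedSpace ℝ E]

theorem tendsto_sum_gridCell_setAverage [CompleteSpace E] {f : ℝ × ℝ → ℝ} {G : (ℝ × ℝ) × ℝ → E}
    (hf : ContinuousOn f (Icc 0 1 ×ˢ Icc 0 1))
    (hG : ContinuousOn G ((Icc 0 1 ×ˢ Icc 0 1) ×ˢ univ)) :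
    Tendsto (fun n : ℕ × ℕ => ∑ i ∈ Finset.range n.1 ×ˢ Finset.range n.2,
        volume.real (gridCell n i) •
          G (((i.1 : ℝ) / n.1, (i.2 : ℝ) / n.2), ⨍ x in gridCell n i, f x))
      (atTop ×ˢ atTop) (𝓝 (∫ x in Ioc (0 : ℝ) 1 ×ˢ Ioc (0 : ℝ) 1, G (x, f x))) := by
  rw [← closure_Ioc_zero_one_prod_self] at hf hG
  have hcompact : IsCompact (closure (Ioc (0 : ℝ) 1 ×ˢ Ioc (0 : ℝ) 1)) := by
    rw [closure_Ioc_zero_one_prod_self]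
    exact isCompact_Icc.prod isCompact_Icc
  have hne : ∀ᶠ n : ℕ × ℕ in atTop ×ˢ atTop, n.1 ≠ 0 ∧ n.2 ≠ 0 :=
    (eventually_ne_atTop 0).prod_mk (eventually_ne_atTop 0)
  refine tendsto_sum_measureReal_smul_comp_setAverage hcompact ?_ tendsto_mesh_gridCell ?_ ?_ ?_
    hf hG <;> filter_upwards [hne] with n ⟨hn₁, hn₂⟩
  · exact (isMeasurablePartition_unitSubinterval hn₁).prod
      (isMeasurablePartition_unitSubinterval hn₂)
  · exact fun i _ => (isConnected_unitSubinterval hn₁ i.1).prod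
      (isConnected_unitSubinterval hn₂ i.2)
  · intro i _
    rw [volume_gridCell]
    positivity
  · intro i _
    rw [gridCell, closure_prod_eq]
    exact ⟨div_mem_closure_unitSubinterval hn₁ i.1, div_mem_closure_unitSubinterval hn₂ i.2⟩

theorem intervalIntegral_intervalIntegral_eq_setIntegral_prod {f : ℝ × ℝ → E} {a b c d : ℝ}
    (hab : a ≤ b) (hcd : c ≤ d) (hf : IntegrableOn f (Ioc a b ×ˢ Ioc c d)) :
    ∫ u in a..b, ∫ v in c..d, f (u, v) = ∫ x in Ioc a b ×ˢ Ioc c d, f x := by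
  simp only [integral_of_le hab, integral_of_le hcd]
  exact (setIntegral_prod f hf).symm

theorem setAverage_gridCell {f : ℝ × ℝ → E} (hf : IntegrableOn f (Icc 0 1 ×ˢ Icc 0 1)) {d p k j : ℕ}
    (hk : k < d) (hj : j < p) :
    ⨍ x in gridCell (d, p) (k, j), f x = ((d : ℝ) * p) •
      ∫ u in ((k : ℝ) / d)..(((k : ℝ) + 1) / d),
        ∫ v in ((j : ℝ) / p)..(((j : ℝ) + 1) / p), f (u, v) := by
  have hd : d ≠ 0 := Nat.ne_zero_of_lt hk
  have hp : p ≠ 0 := Nat.ne_zero_of_lt hj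
  have hsub : gridCell (d, p) (k, j) ⊆ Icc 0 1 ×ˢ Icc 0 1 := prod_mono
    (((isMeasurablePartition_unitSubinterval hd).subset (Finset.mem_range.2 hk)).trans
      Ioc_subset_Icc_self)
    (((isMeasurablePartition_unitSubinterval hp).subset (Finset.mem_range.2 hj)).trans
      Ioc_subset_Icc_self)
  rw [setAverage_eq, measureReal_gridCell, inv_inv,
    intervalIntegral_intervalIntegral_eq_setIntegral_prod (div_lt_succ_div hd k).le
      (div_lt_succ_div hp j).le (hf.mono_set hsub)]
  rfl

theorem riemann_square_limit_general [CompleteSpace E] {f : ℝ × ℝ → ℝ} {G : (ℝ × ℝ) × ℝ → E}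
    (hf : ContinuousOn f (Icc 0 1 ×ˢ Icc 0 1))
    (hG : ContinuousOn G ((Icc 0 1 ×ˢ Icc 0 1) ×ˢ univ)) :
    Tendsto (fun dp : ℕ × ℕ => ((dp.1 : ℝ) * dp.2)⁻¹ •
        ∑ k ∈ Finset.range dp.1, ∑ j ∈ Finset.range dp.2,
          G (((k : ℝ) / dp.1, (j : ℝ) / dp.2), (dp.1 : ℝ) * dp.2 *
            ∫ u in ((k : ℝ) / dp.1)..(((k : ℝ) + 1) / dp.1),
              ∫ v in ((j : ℝ) / dp.2)..(((j : ℝ) + 1) / dp.2), f (u, v)))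
      (atTop ×ˢ atTop) (𝓝 (∫ u in (0 : ℝ)..1, ∫ v in (0 : ℝ)..1, G ((u, v), f (u, v)))) := by
  have hcompact : IsCompact (Icc (0 : ℝ) 1 ×ˢ Icc (0 : ℝ) 1) := isCompact_Icc.prod isCompact_Icc
  have hint : IntegrableOn (fun x => G (x, f x)) (Ioc (0 : ℝ) 1 ×ˢ Ioc (0 : ℝ) 1) :=
    ((hG.comp (continuousOn_id.prodMk hf) fun x hx => ⟨hx, mem_univ _⟩).integrableOn_compact
      hcompact).mono_set (prod_mono Ioc_subset_Icc_self Ioc_subset_Icc_self)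
  rw [intervalIntegral_intervalIntegral_eq_setIntegral_prod (f := fun x => G (x, f x))
    zero_le_one zero_le_one hint]
  refine (tendsto_sum_gridCell_setAverage hf hG).congr fun ⟨d, p⟩ => ?_
  rw [← Finset.sum_product', Finset.smul_sum]
  refine Finset.sum_congr rfl fun ⟨k, j⟩ hi => ?_
  obtain ⟨hk, hj⟩ := Finset.mem_product.1 hi
  rw [measureReal_gridCell, setAverage_gridCell (hf.integrableOn_compact hcompact)
    (Finset.mem_range.1 hk) (Finset.mem_range.1 hj), smul_eq_mul]

end UnitSquare

/-- for continuous `f, g : [0,1]² → ℝ`,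
`lim_{d,p→∞} dp Σ_{k=0}^{d−1} Σ_{j=0}^{p−1} g(k/d, j/p)
  (∫_{k/d}^{(k+1)/d} ∫_{j/p}^{(j+1)/p} f(u,v) dv du)²
  = ∫_0^1 ∫_0^1 g(u,v) f(u,v)² du dv`. -/
theorem riemann_square_limit (f g : ℝ × ℝ → ℝ)
    (hf : ContinuousOn f (Set.Icc 0 1 ×ˢ Set.Icc 0 1))
    (hg : ContinuousOn g (Set.Icc 0 1 ×ˢ Set.Icc 0 1)) :
    Tendsto (fun dp : ℕ × ℕ =>
        (dp.1 : ℝ) * (dp.2 : ℝ) *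
          ∑ k ∈ Finset.range dp.1, ∑ j ∈ Finset.range dp.2,
            g ((k : ℝ) / dp.1, (j : ℝ) / dp.2) *
              (∫ u in ((k : ℝ) / dp.1)..(((k : ℝ) + 1) / dp.1),
                ∫ v in ((j : ℝ) / dp.2)..(((j : ℝ) + 1) / dp.2), f (u, v)) ^ 2)
      (atTop ×ˢ atTop)
      (nhds (∫ u in (0 : ℝ)..1, ∫ v in (0 : ℝ)..1, g (u, v) * f (u, v) ^ 2)) := by
  have hG : ContinuousOn (fun z : (ℝ × ℝ) × ℝ => g z.1 * z.2 ^ 2)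
      ((Set.Icc 0 1 ×ˢ Set.Icc 0 1) ×ˢ Set.univ) :=
    (hg.comp continuousOn_fst fun z hz => hz.1).mul (continuousOn_snd.pow 2)
  refine (riemann_square_limit_general hf hG).congr fun ⟨d, p⟩ => ?_
  have hscale (a b : ℝ) : ((d : ℝ) * p)⁻¹ * (a * (d * p * b) ^ 2) = d * p * (a * b ^ 2) := by
    field_simp
  simp only [smul_eq_mul, Finset.mul_sum, hscale]
end

section
/- Let f, g : [0,1]² → ℝ be continuous and let d ≥ 1 be a fixed integer. Then lim_{p→∞} d·p · Σ_{k=0}^{d−1} Σ_{j=0}^{p−1} g(k/d, j/p) · (∫_{k/d}^{(k+1)/d} ∫_{j/p}^{(j+1)/p} f(u,v) dv du)² = d · Σ_{k=0}^{d−1} ∫_0^1 g(k/d, v) (∫_{k/d}^{(k+1)/d} f(u,v) du)² dv. -/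
open Filter intervalIntegral

/-!
By the mean value theorem for integrals, the average of a continuous `h` over a cell of a partition
is a value `h c` at a point `c` of that cell. A sum such as `∑ j, w (j / p) * h c ^ 2 / p` is then a
Riemann sum whose two factors are evaluated at different points of the same cell. By uniform
continuity of `(x, y) ↦ w x * h y ^ 2` on a square, such a sum still converges to the integral of
this function along the diagonal. Fubini's theorem reduces the limit over the square to this
situation, with `h v` the integral of `f` over the segment of the strip at height `v`.
-/

section RiemannSums

open MeasureTheory Set Topology

variable {E : Type*} [NormedAddCommGroup E] [NormedSpace ℝ E] [CompleteSpace E]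

lemma norm_sum_smul_sub_integral_le {φ : ℝ → E} {t : ℕ → ℝ} {n : ℕ} {c : ℕ → E} {ε : ℝ}
    (ht : Monotone t) (hφ : IntervalIntegrable φ volume (t 0) (t n))
    (hc : ∀ j < n, ∀ v ∈ Ioc (t j) (t (j + 1)), ‖c j - φ v‖ ≤ ε) :
    ‖(∑ j ∈ Finset.range n, (t (j + 1) - t j) • c j) - ∫ v in (t 0)..(t n), φ v‖ ≤
      ε * (t n - t 0) := by
  have ht_succ (j : ℕ) : t j ≤ t (j + 1) := ht j.le_succ
  have hφ_cell (j : ℕ) (hj : j < n) : IntervalIntegrable φ volume (t j) (t (j + 1)) := by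
    refine hφ.mono_set ?_
    rw [uIcc_of_le (ht_succ j), uIcc_of_le (ht n.zero_le)]
    exact Icc_subset_Icc (ht j.zero_le) (ht hj)
  have h_cell (j : ℕ) (hj : j < n) :
      ‖(t (j + 1) - t j) • c j - ∫ v in (t j)..(t (j + 1)), φ v‖ ≤ ε * (t (j + 1) - t j) := by
    rw [← intervalIntegral.integral_const,
      ← integral_sub intervalIntegrable_const (hφ_cell j hj),
      ← abs_of_nonneg (sub_nonneg.2 (ht_succ j))]
    refine norm_integral_le_of_norm_le_const fun v hv ↦ hc j hj v ?_
    rwa [uIoc_of_le (ht_succ j)] at hv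
  rw [← sum_integral_adjacent_intervals hφ_cell, ← Finset.sum_sub_distrib,
    ← Finset.sum_range_sub t n, Finset.mul_sum]
  exact norm_sum_le_of_le _ fun j hj ↦ h_cell j (Finset.mem_range.1 hj)

/-- **Bliss's theorem**. -/
theorem exists_forall_norm_sum_smul_two_tags_sub_integral_le {Φ : ℝ × ℝ → E} {a b ε : ℝ}
    (hΦ : ContinuousOn Φ (Icc a b ×ˢ Icc a b)) (hε : 0 < ε) :
    ∃ δ > 0, ∀ (n : ℕ) (t ξ η : ℕ → ℝ), Monotone t → t 0 = a → t n = b →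
      (∀ j < n, t (j + 1) - t j < δ) →
      (∀ j < n, ξ j ∈ Icc (t j) (t (j + 1))) → (∀ j < n, η j ∈ Icc (t j) (t (j + 1))) →
      ‖(∑ j ∈ Finset.range n, (t (j + 1) - t j) • Φ (ξ j, η j)) - ∫ v in a..b, Φ (v, v)‖ ≤
        ε * (b - a) := by
  obtain ⟨δ, hδ, hΦδ⟩ := Metric.uniformContinuousOn_iff.1
    ((isCompact_Icc.prod isCompact_Icc).uniformContinuousOn_of_continuous hΦ) ε hε
  refine ⟨δ, hδ, ?_⟩
  rintro n t ξ η ht rfl rfl hmesh hξ hη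
  have h_diag : ContinuousOn (fun v ↦ Φ (v, v)) (Icc (t 0) (t n)) :=
    hΦ.comp (by fun_prop) fun v hv ↦ ⟨hv, hv⟩
  refine norm_sum_smul_sub_integral_le ht
    (h_diag.intervalIntegrable_of_Icc (ht n.zero_le)) fun j hj v hv ↦ ?_
  have h_sub : Icc (t j) (t (j + 1)) ⊆ Icc (t 0) (t n) :=
    Icc_subset_Icc (ht j.zero_le) (ht hj)
  have hv' := Ioc_subset_Icc_self hv
  have h_dist {x : ℝ} (hx : x ∈ Icc (t j) (t (j + 1))) : dist x v < δ :=
    (Real.dist_le_of_mem_Icc hx hv').trans_lt (hmesh j hj)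
  rw [← dist_eq_norm]
  exact (hΦδ _ ⟨h_sub (hξ j hj), h_sub (hη j hj)⟩ _ ⟨h_sub hv', h_sub hv'⟩
    (max_lt (h_dist (hξ j hj)) (h_dist (hη j hj)))).le

theorem tendsto_inv_smul_sum_two_tags {Φ : ℝ × ℝ → E} {ξ η : ℕ → ℕ → ℝ}
    (hΦ : ContinuousOn Φ (Icc 0 1 ×ˢ Icc 0 1))
    (hξ : ∀ p : ℕ, ∀ j < p, ξ p j ∈ Icc ((j : ℝ) / p) ((j + 1) / p))
    (hη : ∀ p : ℕ, ∀ j < p, η p j ∈ Icc ((j : ℝ) / p) ((j + 1) / p)) :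
    Tendsto (fun p : ℕ ↦ (p : ℝ)⁻¹ • ∑ j ∈ Finset.range p, Φ (ξ p j, η p j)) atTop
      (𝓝 (∫ v in (0 : ℝ)..1, Φ (v, v))) := by
  refine Metric.nhds_basis_closedBall.tendsto_right_iff.2 fun ε hε ↦ ?_
  obtain ⟨δ, hδ, hΦδ⟩ := exists_forall_norm_sum_smul_two_tags_sub_integral_le hΦ hε
  filter_upwards [eventually_gt_atTop 0,
    (tendsto_inv_atTop_nhds_zero_nat (𝕜 := ℝ)).eventually_lt_const hδ] with p hp hpδ
  have h_length (j : ℕ) : ((j + 1 : ℕ) : ℝ) / p - (j : ℝ) / p = (p : ℝ)⁻¹ := by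
    push_cast
    ring
  have h_le := hΦδ p (fun j ↦ (j : ℝ) / p) (ξ p) (η p)
    (Nat.mono_cast.div_const p.cast_nonneg) (by simp) (div_self (by positivity))
    (fun j _ ↦ by rwa [h_length]) (by simpa using hξ p) (by simpa using hη p)
  simpa only [h_length, ← Finset.smul_sum, sub_zero, mul_one, ← dist_eq_norm,
    Metric.mem_closedBall] using h_le

lemma div_lt_add_one_div {n : ℕ} (hn : 0 < n) (j : ℕ) : (j : ℝ) / n < (j + 1) / n :=
  div_lt_div_of_pos_right (lt_add_one _) (mod_cast hn)

lemma uIcc_div_subset_Icc_zero_one {n j : ℕ} (hj : j < n) :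
    uIcc ((j : ℝ) / n) ((j + 1) / n) ⊆ Icc 0 1 := by
  rw [uIcc_of_le (div_lt_add_one_div hj.pos j).le]
  exact Icc_subset_Icc (by positivity) (div_le_one_of_le₀ (mod_cast hj) n.cast_nonneg)

lemma tendsto_inv_smul_sum_interval_average {Ψ : ℝ × ℝ → E} {h : ℝ → ℝ}
    (hΨ : ContinuousOn Ψ (Icc 0 1 ×ˢ univ)) (hh : ContinuousOn h (Icc 0 1)) :
    Tendsto (fun p : ℕ ↦ (p : ℝ)⁻¹ •
        ∑ j ∈ Finset.range p, Ψ ((j : ℝ) / p, ⨍ v in ((j : ℝ) / p)..((j + 1) / p), h v))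
      atTop (𝓝 (∫ v in (0 : ℝ)..1, Ψ (v, h v))) := by
  have h_mean (p j : ℕ) (hj : j < p) : ∃ c ∈ Icc ((j : ℝ) / p) ((j + 1) / p),
      h c = ⨍ v in ((j : ℝ) / p)..((j + 1) / p), h v := by
    have h_lt := div_lt_add_one_div hj.pos j
    obtain ⟨c, hc, hc_eq⟩ :=
      exists_eq_interval_average h_lt.ne (hh.mono (uIcc_div_subset_Icc_zero_one hj))
    rw [uIoo_of_lt h_lt] at hc
    exact ⟨c, Ioo_subset_Icc_self hc, hc_eq⟩
  choose! c hc hc_eq using h_mean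
  have hΦ : ContinuousOn (fun x : ℝ × ℝ ↦ Ψ (x.1, h x.2)) (Icc 0 1 ×ˢ Icc 0 1) :=
    hΨ.comp (continuousOn_fst.prodMk (hh.comp continuousOn_snd fun _ hx ↦ hx.2))
      fun _ hx ↦ ⟨hx.1, mem_univ _⟩
  have h_left (p j : ℕ) (hj : j < p) : (j : ℝ) / p ∈ Icc ((j : ℝ) / p) ((j + 1) / p) :=
    left_mem_Icc.2 (div_lt_add_one_div hj.pos j).le
  refine (tendsto_inv_smul_sum_two_tags hΦ h_left hc).congr fun p ↦ ?_
  congr 1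
  exact Finset.sum_congr rfl fun j hj ↦ by rw [hc_eq p j (Finset.mem_range.1 hj)]

end RiemannSums

section Strips

open MeasureTheory Set Topology

lemma continuousOn_intervalIntegral_of_continuousOn_prod {X E : Type*} [TopologicalSpace X]
    [NormedAddCommGroup E] [NormedSpace ℝ E] {f : ℝ × X → E} {a b : ℝ} {s : Set X}
    (hf : ContinuousOn f (uIcc a b ×ˢ s)) :
    ContinuousOn (fun x ↦ ∫ u in a..b, f (u, x)) s := by
  rw [continuousOn_iff_continuous_domRestrict]
  have h_ext : Continuous fun z : s × ℝ ↦ f (projIcc _ _ inf_le_sup z.2, z.1) :=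
    hf.comp_continuous (by fun_prop) fun z ↦ ⟨Subtype.prop _, z.1.2⟩
  refine (continuous_parametric_intervalIntegral_of_continuous' (μ := volume)
    (f := fun (x : s) u ↦ f (projIcc _ _ inf_le_sup u, x)) h_ext a b).congr fun x ↦ ?_
  exact integral_congr fun u hu ↦ by rw [projIcc_of_mem _ hu]

lemma intervalIntegral_swap_of_continuousOn {E : Type*} [NormedAddCommGroup E] [NormedSpace ℝ E]
    {f : ℝ × ℝ → E} {a b c d : ℝ} (hf : ContinuousOn f (uIcc a b ×ˢ uIcc c d)) :
    ∫ u in a..b, ∫ v in c..d, f (u, v) = ∫ v in c..d, ∫ u in a..b, f (u, v) :=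
  intervalIntegral_intervalIntegral_swap (F := fun u v ↦ f (u, v)) <|
    (hf.integrableOn_compact (isCompact_uIcc.prod isCompact_uIcc)).mono_set
      (prod_mono uIoc_subset_uIcc uIoc_subset_uIcc)

lemma tendsto_pow_mul_sum_mul_integral_strip_pow {f : ℝ × ℝ → ℝ} {w : ℝ → ℝ} {a b : ℝ}
    (hf : ContinuousOn f (uIcc a b ×ˢ Icc 0 1)) (hw : ContinuousOn w (Icc 0 1)) (q : ℕ) :
    Tendsto (fun p : ℕ ↦ (p : ℝ) ^ q * ∑ j ∈ Finset.range p, w ((j : ℝ) / p) *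
        (∫ u in a..b, ∫ v in ((j : ℝ) / p)..((j + 1) / p), f (u, v)) ^ (q + 1))
      atTop (𝓝 (∫ v in (0 : ℝ)..1, w v * (∫ u in a..b, f (u, v)) ^ (q + 1))) := by
  have h_avg (p j : ℕ) (hj : j < p) :
      ⨍ v in ((j : ℝ) / p)..((j + 1) / p), ∫ u in a..b, f (u, v) =
        p * ∫ u in a..b, ∫ v in ((j : ℝ) / p)..((j + 1) / p), f (u, v) := by
    rw [interval_average_eq_div, intervalIntegral_swap_of_continuousOn
      (hf.mono (prod_mono_right (uIcc_div_subset_Icc_zero_one hj))),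
      ← sub_div, add_sub_cancel_left, div_div_eq_mul_div, div_one, mul_comm]
  have hΨ : ContinuousOn (fun x : ℝ × ℝ ↦ w x.1 * x.2 ^ (q + 1)) (Icc 0 1 ×ˢ univ) :=
    (hw.comp continuousOn_fst fun _ hx ↦ hx.1).mul (by fun_prop)
  refine (tendsto_inv_smul_sum_interval_average hΨ
    (continuousOn_intervalIntegral_of_continuousOn_prod hf)).congr fun p ↦ ?_
  rw [smul_eq_mul, Finset.mul_sum, Finset.mul_sum]
  refine Finset.sum_congr rfl fun j hj ↦ ?_
  have hj' := Finset.mem_range.1 hj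
  have hp : (p : ℝ) ≠ 0 := mod_cast hj'.ne_bot
  rw [h_avg p j hj', mul_pow, pow_succ (p : ℝ)]
  field_simp

end Strips

/-- for continuous `f, g : [0,1]² → ℝ` and fixed `d ≥ 1`,
`lim_{p→∞} dp Σ_{k=0}^{d−1} Σ_{j=0}^{p−1} g(k/d, j/p)
  (∫_{k/d}^{(k+1)/d} ∫_{j/p}^{(j+1)/p} f(u,v) dv du)²
  = d Σ_{k=0}^{d−1} ∫_0^1 g(k/d, v) (∫_{k/d}^{(k+1)/d} f(u,v) du)² dv`. -/
theorem riemann_square_limit_one_sided (f g : ℝ × ℝ → ℝ)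
    (hf : ContinuousOn f (Set.Icc 0 1 ×ˢ Set.Icc 0 1))
    (hg : ContinuousOn g (Set.Icc 0 1 ×ˢ Set.Icc 0 1))
    (d : ℕ) (hd : 1 ≤ d) :
    Tendsto (fun p : ℕ =>
        (d : ℝ) * (p : ℝ) *
          ∑ k ∈ Finset.range d, ∑ j ∈ Finset.range p,
            g ((k : ℝ) / d, (j : ℝ) / p) *
              (∫ u in ((k : ℝ) / d)..(((k : ℝ) + 1) / d),
                ∫ v in ((j : ℝ) / p)..(((j : ℝ) + 1) / p), f (u, v)) ^ 2)
      atTop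
      (nhds ((d : ℝ) * ∑ k ∈ Finset.range d,
        ∫ v in (0 : ℝ)..1, g ((k : ℝ) / d, v) *
          (∫ u in ((k : ℝ) / d)..(((k : ℝ) + 1) / d), f (u, v)) ^ 2)) := by
  have h_strip (k : ℕ) (hk : k ∈ Finset.range d) :
      Tendsto (fun p : ℕ ↦ (p : ℝ) * ∑ j ∈ Finset.range p, g ((k : ℝ) / d, (j : ℝ) / p) *
          (∫ u in ((k : ℝ) / d)..((k + 1) / d),
            ∫ v in ((j : ℝ) / p)..((j + 1) / p), f (u, v)) ^ 2)
        atTop (nhds (∫ v in (0 : ℝ)..1, g ((k : ℝ) / d, v) *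
          (∫ u in ((k : ℝ) / d)..((k + 1) / d), f (u, v)) ^ 2)) := by
    have hk_sub := uIcc_div_subset_Icc_zero_one (Finset.mem_range.1 hk)
    have hg_slice : ContinuousOn (fun v ↦ g ((k : ℝ) / d, v)) (Set.Icc 0 1) :=
      hg.comp (by fun_prop) fun v hv ↦ ⟨hk_sub Set.left_mem_uIcc, hv⟩
    simpa only [pow_one] using tendsto_pow_mul_sum_mul_integral_strip_pow
      (hf.mono (Set.prod_mono_left hk_sub)) hg_slice 1
  refine ((tendsto_finsetSum _ h_strip).const_mul (d : ℝ)).congr fun p ↦ ?_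
  rw [← Finset.mul_sum, mul_assoc]
end

section
/- Let 3/2 < α < 2 and 0 < a < b. Then there exists a constant C > 0 (depending only on α, a, b) such that for every integer d ≥ 1 and all reals y, x with a ≤ y ≤ x ≤ b, setting N = ⌊dx⌋ − ⌊dy⌋, one has d^{2−2α} Σ_{m=1}^{N} (N − m) m^{2(α−2)} ≤ C (x − y). -/
/-!
Put `p = 2α - 3 > 0`, so that the summands are `(N - m) m ^ (p - 1)`. Up to constants depending
only on `p`, `∑ m ^ (p - 1) ≲ N ^ p`: for `p ≤ 1` the tangent lines of the concave function `t ^ p`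
give a telescoping bound, and for `p ≥ 1` every term is at most `N ^ (p - 1)`. As `N - m ≤ N - 1`,
the sum is `≲ (N - 1) N ^ p`. With `u = d (x - y)` we only know `N ≤ u + 1`, which says little for
small `u`; but `(N - 1) N ^ p` vanishes for `N ≤ 1`, while `N ≤ 2 (N - 1) ≤ 2 u` for `N ≥ 2`. Hence
the sum is `≲ u ^ (2α - 2)`, the factor `d ^ (2 - 2α)` cancels the scale, and since `2α - 2 ≥ 1`,
`(x - y) ^ (2α - 2)` is at most a constant times `x - y` on bounded increments.
-/

open Finset

theorem rpow_le_rpow_add_mul_rpow_sub_one_mul_sub {p x y : ℝ} (hp₀ : 0 ≤ p) (hp₁ : p ≤ 1)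
    (hx : 0 < x) (hy : 0 ≤ y) : y ^ p ≤ x ^ p + p * x ^ (p - 1) * (y - x) := by
  have hs : -1 ≤ (y - x) / x := by
    rw [le_div_iff₀ hx]
    linarith
  have hyx : y = x * (1 + (y - x) / x) := by
    field_simp
    ring
  calc y ^ p = x ^ p * (1 + (y - x) / x) ^ p := by
        rw [← Real.mul_rpow hx.le (by linarith), ← hyx]
    _ ≤ x ^ p * (1 + p * ((y - x) / x)) := by
        gcongr
        exact rpow_one_add_le_one_add_mul_self hs hp₀ hp₁
    _ = x ^ p + p * x ^ (p - 1) * (y - x) := by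
        rw [Real.rpow_sub_one hx.ne']
        ring

theorem sum_Icc_rpow_sub_one_le_inv_mul_rpow {p : ℝ} (hp₀ : 0 < p) (hp₁ : p ≤ 1) (N : ℕ) :
    ∑ m ∈ Icc 1 N, (m : ℝ) ^ (p - 1) ≤ p⁻¹ * (N : ℝ) ^ p := by
  rw [le_inv_mul_iff₀ hp₀]
  induction N with
  | zero => simp [Real.zero_rpow hp₀.ne']
  | succ n ih =>
    have htangent := rpow_le_rpow_add_mul_rpow_sub_one_mul_sub (x := (n + 1 : ℕ)) (y := n)
      hp₀.le hp₁ (by positivity) (by positivity)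
    rw [sum_Icc_succ_top (by lia), mul_add]
    push_cast at htangent ⊢
    linarith

theorem sum_Icc_rpow_sub_one_le_rpow {p : ℝ} (hp : 1 ≤ p) (N : ℕ) :
    ∑ m ∈ Icc 1 N, (m : ℝ) ^ (p - 1) ≤ (N : ℝ) ^ p := by
  calc ∑ m ∈ Icc 1 N, (m : ℝ) ^ (p - 1) ≤ ∑ _m ∈ Icc 1 N, (N : ℝ) ^ (p - 1) := by
        gcongr with m hm
        exact (mem_Icc.mp hm).2
    _ = (N : ℝ) * (N : ℝ) ^ (p - 1) := by simp
    _ = (N : ℝ) ^ p := by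
        rw [← Real.rpow_one_add' (by positivity) (by linarith), add_sub_cancel]

theorem sum_Icc_rpow_sub_one_le_max_mul_rpow {p : ℝ} (hp : 0 < p) (N : ℕ) :
    ∑ m ∈ Icc 1 N, (m : ℝ) ^ (p - 1) ≤ max 1 p⁻¹ * (N : ℝ) ^ p := by
  rcases le_total p 1 with hp₁ | hp₁
  · exact (sum_Icc_rpow_sub_one_le_inv_mul_rpow hp hp₁ N).trans (by gcongr; exact le_max_right _ _)
  · exact (sum_Icc_rpow_sub_one_le_rpow hp₁ N).trans
      (le_mul_of_one_le_left (by positivity) (le_max_left _ _))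

theorem sum_Icc_sub_mul_rpow_sub_one_le {p : ℝ} (hp : 0 < p) (N : ℕ) :
    ∑ m ∈ Icc 1 N, ((N : ℝ) - m) * (m : ℝ) ^ (p - 1) ≤
      max 1 p⁻¹ * (((N : ℝ) - 1) * (N : ℝ) ^ p) := by
  rcases N.eq_zero_or_pos with rfl | hN
  · simp [Real.zero_rpow hp.ne']
  have hN₁ : (0 : ℝ) ≤ N - 1 := sub_nonneg.mpr (by exact_mod_cast hN)
  calc ∑ m ∈ Icc 1 N, ((N : ℝ) - m) * (m : ℝ) ^ (p - 1)
      ≤ ∑ m ∈ Icc 1 N, ((N : ℝ) - 1) * (m : ℝ) ^ (p - 1) := by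
        gcongr with m hm
        exact_mod_cast (mem_Icc.mp hm).1
    _ = ((N : ℝ) - 1) * ∑ m ∈ Icc 1 N, (m : ℝ) ^ (p - 1) := (mul_sum ..).symm
    _ ≤ ((N : ℝ) - 1) * (max 1 p⁻¹ * (N : ℝ) ^ p) := by
        gcongr
        exact sum_Icc_rpow_sub_one_le_max_mul_rpow hp N
    _ = max 1 p⁻¹ * (((N : ℝ) - 1) * (N : ℝ) ^ p) := mul_left_comm ..

theorem natCast_sub_one_mul_rpow_le {p u : ℝ} {N : ℕ} (hp : 0 < p) (hu : 0 ≤ u)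
    (hN : (N : ℝ) ≤ u + 1) : ((N : ℝ) - 1) * (N : ℝ) ^ p ≤ 2 ^ p * u ^ (p + 1) := by
  have hright : 0 ≤ 2 ^ p * u ^ (p + 1) := by positivity
  rcases lt_or_ge N 2 with hN₂ | hN₂
  · interval_cases N <;> simpa [Real.zero_rpow hp.ne'] using hright
  have hN₂' : (2 : ℝ) ≤ N := by exact_mod_cast hN₂
  calc ((N : ℝ) - 1) * (N : ℝ) ^ p ≤ u * (2 * u) ^ p := by
        gcongr <;> linarith
    _ = 2 ^ p * u ^ (p + 1) := by
        rw [Real.mul_rpow zero_le_two hu, Real.rpow_add_one' hu (by linarith)]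
        ring

theorem natCast_floor_sub_floor_lt {s t : ℝ} (hs : 0 ≤ s) (hts : t ≤ s) :
    ((⌊s⌋₊ - ⌊t⌋₊ : ℕ) : ℝ) < s - t + 1 := by
  rw [Nat.cast_sub (Nat.floor_le_floor hts)]
  linarith [Nat.floor_le hs, Nat.lt_floor_add_one t]

theorem sum_increment_le_mul_rpow {α d x y : ℝ} (hα : 3 / 2 < α) (hd : 0 < d) (hy : 0 ≤ y)
    (hyx : y ≤ x) :
    d ^ (2 - 2 * α) *
        ∑ m ∈ Icc 1 (⌊d * x⌋₊ - ⌊d * y⌋₊),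
          (((⌊d * x⌋₊ - ⌊d * y⌋₊ : ℕ) : ℝ) - (m : ℝ)) * (m : ℝ) ^ (2 * (α - 2))
      ≤ max 1 (2 * α - 3)⁻¹ * 2 ^ (2 * α - 3) * (x - y) ^ (2 * α - 2) := by
  have hp : 0 < 2 * α - 3 := by linarith
  have hxy : 0 ≤ x - y := sub_nonneg.mpr hyx
  have hN : ((⌊d * x⌋₊ - ⌊d * y⌋₊ : ℕ) : ℝ) ≤ d * (x - y) + 1 := by
    rw [mul_sub]
    exact (natCast_floor_sub_floor_lt (mul_nonneg hd.le (hy.trans hyx)) (by gcongr)).le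
  have hscale : d ^ (2 - 2 * α) * (d * (x - y)) ^ (2 * α - 2) = (x - y) ^ (2 * α - 2) := by
    rw [Real.mul_rpow hd.le hxy, ← mul_assoc, ← Real.rpow_add hd]
    simp
  generalize ⌊d * x⌋₊ - ⌊d * y⌋₊ = N at hN ⊢
  have hcard := natCast_sub_one_mul_rpow_le hp (by positivity) hN
  rw [show 2 * α - 3 + 1 = 2 * α - 2 by ring] at hcard
  rw [show 2 * (α - 2) = 2 * α - 3 - 1 by ring]
  calc d ^ (2 - 2 * α) * ∑ m ∈ Icc 1 N, ((N : ℝ) - m) * (m : ℝ) ^ (2 * α - 3 - 1)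
      ≤ d ^ (2 - 2 * α) *
          (max 1 (2 * α - 3)⁻¹ * (2 ^ (2 * α - 3) * (d * (x - y)) ^ (2 * α - 2))) := by
        gcongr
        exact (sum_Icc_sub_mul_rpow_sub_one_le hp N).trans (by gcongr)
    _ = max 1 (2 * α - 3)⁻¹ * 2 ^ (2 * α - 3) *
          (d ^ (2 - 2 * α) * (d * (x - y)) ^ (2 * α - 2)) := by ring
    _ = max 1 (2 * α - 3)⁻¹ * 2 ^ (2 * α - 3) * (x - y) ^ (2 * α - 2) := by rw [hscale]

theorem sum_increment_bound_noncentral_general (α L : ℝ) (hα : 3 / 2 < α) (hL : 0 < L) :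
    ∃ C : ℝ, 0 < C ∧ ∀ d : ℝ, 0 < d → ∀ x y : ℝ, 0 ≤ y → y ≤ x → x - y ≤ L →
      d ^ (2 - 2 * α) *
          ∑ m ∈ Icc 1 (⌊d * x⌋₊ - ⌊d * y⌋₊),
            (((⌊d * x⌋₊ - ⌊d * y⌋₊ : ℕ) : ℝ) - (m : ℝ)) * (m : ℝ) ^ (2 * (α - 2))
        ≤ C * (x - y) := by
  refine ⟨max 1 (2 * α - 3)⁻¹ * 2 ^ (2 * α - 3) * L ^ (2 * α - 3), by positivity, ?_⟩
  intro d hd x y hy hyx hxyL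
  have hxy : 0 ≤ x - y := sub_nonneg.mpr hyx
  have hlinear : (x - y) ^ (2 * α - 2) ≤ L ^ (2 * α - 3) * (x - y) := by
    rw [show 2 * α - 2 = 2 * α - 3 + 1 by ring, Real.rpow_add_one' hxy (by linarith)]
    gcongr
    linarith
  rw [mul_assoc _ (L ^ _)]
  exact (sum_increment_le_mul_rpow hα hd hy hyx).trans (by gcongr)

/-- for `3/2 < α < 2` and `0 < a < b` there is `C > 0` such that
for every integer `d ≥ 1` and reals `a ≤ y ≤ x ≤ b`, with `N = ⌊dx⌋ − ⌊dy⌋`,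
`d^{2−2α} Σ_{m=1}^{N} (N − m) m^{2(α−2)} ≤ C (x − y)`. -/
theorem sum_increment_bound_noncentral (α a b : ℝ) (hα1 : 3 / 2 < α) (hα2 : α < 2)
    (ha : 0 < a) (hab : a < b) :
    ∃ C : ℝ, 0 < C ∧ ∀ d : ℕ, 1 ≤ d → ∀ x y : ℝ, a ≤ y → y ≤ x → x ≤ b →
      (d : ℝ) ^ (2 - 2 * α) *
          ∑ m ∈ Finset.Icc 1 (⌊(d : ℝ) * x⌋₊ - ⌊(d : ℝ) * y⌋₊),
            (((⌊(d : ℝ) * x⌋₊ - ⌊(d : ℝ) * y⌋₊ : ℕ) : ℝ) - (m : ℝ)) *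
              (m : ℝ) ^ (2 * (α - 2))
        ≤ C * (x - y) := by
  obtain ⟨C, hC, hbound⟩ :=
    sum_increment_bound_noncentral_general α (b - a) hα1 (sub_pos.mpr hab)
  exact ⟨C, hC, fun d hd x y hay hyx hxb ↦
    hbound d (by exact_mod_cast hd) x y (ha.le.trans hay) hyx (by linarith)⟩
end

section
/- Fix x > 0. Then there exists a constant C > 0 (depending only on x) such that for all integers d ≥ 3: |x − (1/(d ln d)) Σ_{m=1}^{⌊dx⌋−1} (⌊dx⌋ − m − 1)/m| ≤ C / ln d. -/
/-!
With `n = ⌊y⌋` and `k = n - 1`, the sum `∑_{m=1}^{n-1} (n - m - 1) / m` equals `k (H_k - 1)`, which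
is `y log y + O(y + 1)` because `H_k = log k + O(1)`. For `y = d x` the main term is
`d x log d + d x log x`, so dividing by `d log d` leaves `x` up to an error of order `1 / log d`.
-/

open Finset

lemma sum_Icc_sub_div {K : Type*} [DivisionRing K] [CharZero K] (a : K) (n : ℕ) :
    ∑ m ∈ Icc 1 n, (a - m) / m = a * harmonic n - n := by
  have term_eq : ∀ m ∈ Icc 1 n, (a - m) / (m : K) = a * (m : K)⁻¹ - 1 := by
    intro m hm
    have hm0 : (m : K) ≠ 0 := Nat.cast_ne_zero.mpr (Nat.one_le_iff_ne_zero.mp (mem_Icc.mp hm).1)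
    rw [sub_div, div_self hm0, div_eq_mul_inv]
  rw [sum_congr rfl term_eq, sum_sub_distrib, ← mul_sum, harmonic_eq_sum_Icc]
  simp

lemma sum_Icc_sub_sub_one_div {K : Type*} [DivisionRing K] [CharZero K] (n : ℕ) :
    ∑ m ∈ Icc 1 (n - 1), ((n : K) - m - 1) / m = (n - 1 : ℕ) * ((harmonic (n - 1) : K) - 1) := by
  cases n with
  | zero => simp
  | succ k =>
    simp only [Nat.cast_succ, Nat.add_sub_cancel, sub_right_comm _ _ (1 : K), add_sub_cancel_right]
    rw [sum_Icc_sub_div, mul_sub_one]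

lemma mul_harmonic_sub_one_le_mul_log {y : ℝ} {k : ℕ} (hky : k ≤ y) :
    k * ((harmonic k : ℝ) - 1) ≤ k * Real.log y := by
  obtain rfl | hk := k.eq_zero_or_pos
  · simp
  · have log_le : Real.log k ≤ Real.log y := Real.log_le_log (by positivity) hky
    gcongr
    linarith [harmonic_le_one_add_log k]

lemma mul_harmonic_sub_one_le_mul_log_add_one {y : ℝ} {k : ℕ} (hy : 0 < y) (hky : k ≤ y) :
    k * ((harmonic k : ℝ) - 1) ≤ y * Real.log y + 1 := by
  have neg_log_le : -Real.log y ≤ y⁻¹ := by linarith [Real.one_sub_inv_le_log_of_pos hy]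
  have error_le : (y - k) * -Real.log y ≤ 1 :=
    calc (y - k) * -Real.log y ≤ (y - k) * y⁻¹ := by gcongr
      _ ≤ y * y⁻¹ := by gcongr; exact sub_le_self y k.cast_nonneg
      _ = 1 := mul_inv_cancel₀ hy.ne'
  linarith [mul_harmonic_sub_one_le_mul_log hky]

lemma mul_log_le_mul_log_add_one_add_one {y : ℝ} {k : ℕ} (hy : 0 < y) (hyk : y ≤ k + 2) :
    k * Real.log y ≤ k * Real.log (k + 1) + 1 := by
  have hk : (0 : ℝ) < k + 1 := by positivity
  have log_sub_le : Real.log y - Real.log (k + 1) ≤ 1 / (k + 1) :=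
    calc Real.log y - Real.log (k + 1) = Real.log (y / (k + 1)) := (Real.log_div hy.ne' hk.ne').symm
      _ ≤ y / (k + 1) - 1 := Real.log_le_sub_one_of_pos (div_pos hy hk)
      _ = (y - (k + 1)) / (k + 1) := by rw [sub_div, div_self hk.ne']
      _ ≤ 1 / (k + 1) := by gcongr; linarith
  have error_le : (k : ℝ) * (Real.log y - Real.log (k + 1)) ≤ 1 :=
    calc (k : ℝ) * (Real.log y - Real.log (k + 1)) ≤ k * (1 / (k + 1)) := by gcongr
      _ = k / (k + 1) := mul_one_div _ _
      _ ≤ 1 := (div_le_one hk).mpr (by linarith)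
  linarith

lemma mul_log_le_mul_harmonic_sub_one_add {y : ℝ} {k : ℕ} (hy : 0 < y) (hky : k ≤ y)
    (hyk : y ≤ k + 2) :
    y * Real.log y ≤ k * ((harmonic k : ℝ) - 1) + (3 * y + 1) := by
  have excess_le : (y - k) * Real.log y ≤ 2 * y :=
    calc (y - k) * Real.log y ≤ (y - k) * y := by
          gcongr
          exact Real.log_le_self hy.le
      _ ≤ 2 * y := by gcongr; linarith
  have log_le_harmonic : (k : ℝ) * Real.log (k + 1) ≤ k * harmonic k := by
    gcongr
    exact_mod_cast log_add_one_le_harmonic k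
  linarith [mul_log_le_mul_log_add_one_add_one hy hyk]

lemma abs_mul_log_sub_sum_le {y : ℝ} (hy : 0 < y) :
    |y * Real.log y - ∑ m ∈ Icc 1 (⌊y⌋₊ - 1), ((⌊y⌋₊ : ℝ) - m - 1) / m| ≤ 3 * y + 1 := by
  have floor_le : (⌊y⌋₊ : ℝ) ≤ y := Nat.floor_le hy.le
  have pred_le : ((⌊y⌋₊ - 1 : ℕ) : ℝ) ≤ y := (Nat.cast_le.mpr (Nat.sub_le _ _)).trans floor_le
  have le_pred_add_two : y ≤ (⌊y⌋₊ - 1 : ℕ) + 2 := by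
    have floor_le_pred : (⌊y⌋₊ : ℝ) ≤ (⌊y⌋₊ - 1 : ℕ) + 1 := by exact_mod_cast le_tsub_add
    linarith [Nat.lt_floor_add_one y]
  rw [sum_Icc_sub_sub_one_div, abs_le]
  constructor
  · linarith [mul_harmonic_sub_one_le_mul_log_add_one hy pred_le]
  · linarith [mul_log_le_mul_harmonic_sub_one_add hy pred_le le_pred_add_two]

theorem log_sum_estimate_general {x d : ℝ} (hx : 0 < x) (hd : 1 < d) :
    |x - (1 / (d * Real.log d)) *
        ∑ m ∈ Icc 1 (⌊d * x⌋₊ - 1), ((⌊d * x⌋₊ : ℝ) - m - 1) / m|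
      ≤ (1 + 3 * x + x * |Real.log x|) / Real.log d := by
  have hd0 : 0 < d := one_pos.trans hd
  have hlog : 0 < Real.log d := Real.log_pos hd
  have hdx : 0 < d * x := mul_pos hd0 hx
  have sum_error := abs_mul_log_sub_sum_le hdx
  set S := ∑ m ∈ Icc 1 (⌊d * x⌋₊ - 1), ((⌊d * x⌋₊ : ℝ) - m - 1) / m
  have error_eq : x - 1 / (d * Real.log d) * S =
      (d * x * Real.log (d * x) - S - d * x * Real.log x) / (d * Real.log d) := by
    rw [Real.log_mul hd0.ne' hx.ne']
    field_simp
    ring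
  have numerator_le : |d * x * Real.log (d * x) - S - d * x * Real.log x| ≤
      d * (1 + 3 * x + x * |Real.log x|) :=
    calc |d * x * Real.log (d * x) - S - d * x * Real.log x|
        ≤ |d * x * Real.log (d * x) - S| + |d * x * Real.log x| := abs_sub _ _
      _ ≤ (3 * (d * x) + 1) + d * x * |Real.log x| := by
          rw [abs_mul (d * x) (Real.log x), abs_of_pos hdx]
          gcongr
      _ ≤ d * (1 + 3 * x + x * |Real.log x|) := by linarith
  calc |x - 1 / (d * Real.log d) * S|
      ≤ d * (1 + 3 * x + x * |Real.log x|) / (d * Real.log d) := by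
        rw [error_eq, abs_div, abs_of_pos (mul_pos hd0 hlog)]
        gcongr
    _ = (1 + 3 * x + x * |Real.log x|) / Real.log d := mul_div_mul_left _ _ hd0.ne'

/-- for fixed `x > 0` there is `C > 0` (depending only on `x`)
such that for all integers `d ≥ 3`,
`|x − (1/(d ln d)) Σ_{m=1}^{⌊dx⌋−1} (⌊dx⌋ − m − 1)/m| ≤ C / ln d`. -/
theorem log_sum_estimate (x : ℝ) (hx : 0 < x) :
    ∃ C : ℝ, 0 < C ∧ ∀ d : ℕ, 3 ≤ d →
      |x - (1 / ((d : ℝ) * Real.log d)) *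
          ∑ m ∈ Finset.Icc 1 (⌊(d : ℝ) * x⌋₊ - 1),
            (((⌊(d : ℝ) * x⌋₊ : ℕ) : ℝ) - (m : ℝ) - 1) / (m : ℝ)|
        ≤ C / Real.log d := by
  refine ⟨1 + 3 * x + x * |Real.log x|, by positivity, fun d hd => ?_⟩
  exact log_sum_estimate_general hx (Nat.one_lt_cast.mpr (by lia))
end
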